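/- arXiv:1804.03374 — 3 statements merged into one kernel-verified Lean document; each statement's English description precedes it below -/
import Mathlib

section
/- For m > 0 and any smooth compactly supported f : ℝ^d → ℝ, the function F(t,x) = Q_t^{(m)}f(x) on (0,∞)×ℝ^d satisfies the elliptic equation Δ_x F + ∂²_{tt} F + ((1−m)/t) ∂_t F = 0. -/
open MeasureTheory

/-- The operator `Q_t^{(m)} f(x) = (1/c(m,d)) ∫ f(ty+x)(1+|y|²)^{-(m+d)/2} dy`. -/
noncomputable def Qop (d : ℕ) (m : ℝ) (f : EuclideanSpace ℝ (Fin d) → ℝ) (t : ℝ)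
    (x : EuclideanSpace ℝ (Fin d)) : ℝ :=
  (∫ y : EuclideanSpace ℝ (Fin d), f (t • y + x) * (1 + ‖y‖ ^ 2) ^ (-(m + d) / 2)) /
    ∫ y : EuclideanSpace ℝ (Fin d), (1 + ‖y‖ ^ 2) ^ (-(m + d) / 2)

theorem aux_deriv {E : Type*} [NormedAddCommGroup E] [MeasurableSpace E] [BorelSpace E]
    {μ : Measure E} [IsFiniteMeasureOnCompacts μ] [SecondCountableTopology E]
    (f : E → ℝ) (hf : Continuous f) (hs : HasCompactSupport f) (S : Set ℝ) (hS : IsOpen S)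
    (φ φ' : ℝ → E → ℝ) (hφ : ∀ s ∈ S, Continuous (φ s))
    (hc : ContinuousOn (fun p : ℝ × E => φ' p.1 p.2) (S ×ˢ Set.univ))
    (hd : ∀ s ∈ S, ∀ u, HasDerivAt (fun r => φ r u) (φ' s u) s) (s : ℝ) (hsS : s ∈ S) :
    HasDerivAt (fun r => ∫ u, f u * φ r u ∂μ) (∫ u, f u * φ' s u ∂μ) s := by
  obtain ⟨ε, hε, hb⟩ := Metric.nhds_basis_closedBall.mem_iff.1 (hS.mem_nhds hsS)
  have hK : IsCompact (Metric.closedBall s ε ×ˢ tsupport f) :=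
    (isCompact_closedBall s ε).prod hs
  obtain ⟨C, hC⟩ := hK.exists_bound_of_continuousOn
    (hc.mono (Set.prod_mono hb (Set.subset_univ _)))
  have hc' : ∀ r ∈ S, Continuous (φ' r) := by
    intro r hr
    have : ContinuousOn (fun u : E => φ' r u) Set.univ :=
      hc.comp (f := fun u : E => (r, u)) (by fun_prop) (fun u _ => ⟨hr, trivial⟩)
    exact continuousOn_univ.1 this
  refine (hasDerivAt_integral_of_dominated_loc_of_deriv_le (𝕜 := ℝ)
    (F := fun r u => f u * φ r u) (F' := fun r u => f u * φ' r u) (bound := fun u => |f u| * C)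
    (Metric.closedBall_mem_nhds s hε) ?_ ?_ ?_ ?_ ?_ ?_).2
  · filter_upwards [hS.mem_nhds hsS] with r hr
    exact (hf.mul (hφ r hr)).aestronglyMeasurable
  · exact (hf.mul (hφ s hsS)).integrable_of_hasCompactSupport hs.mul_right
  · exact (hf.mul (hc' s hsS)).aestronglyMeasurable
  · refine Filter.Eventually.of_forall fun u r hr => ?_
    rw [norm_mul, Real.norm_eq_abs]
    by_cases hu : u ∈ tsupport f
    · exact mul_le_mul_of_nonneg_left (hC (r, u) ⟨hr, hu⟩) (abs_nonneg _)
    · simp [image_eq_zero_of_notMem_tsupport hu]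
  · exact (hf.integrable_of_hasCompactSupport hs).abs.mul_const C
  · exact Filter.Eventually.of_forall fun u r hr => (hd r (hb hr) u).const_mul (f u)

theorem Qop_eq (d : ℕ) (m : ℝ) (f : EuclideanSpace ℝ (Fin d) → ℝ) (t : ℝ) (ht : 0 < t)
    (x : EuclideanSpace ℝ (Fin d)) :
    Qop d m f t x = (∫ u, f u * (t ^ m * (t ^ 2 + ‖u - x‖ ^ 2) ^ (-(m + d) / 2))) /
      ∫ y : EuclideanSpace ℝ (Fin d), (1 + ‖y‖ ^ 2) ^ (-(m + d) / 2) := by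
  unfold Qop
  congr 1
  set g : EuclideanSpace ℝ (Fin d) → ℝ :=
    fun u => f u * (t ^ m * (t ^ 2 + ‖u - x‖ ^ 2) ^ (-(m + d) / 2)) with hg
  have h1 : ∫ u, g u = ∫ u, g (u + x) := (integral_add_right_eq_self g x).symm
  have h2 := Measure.integral_comp_smul (volume : Measure (EuclideanSpace ℝ (Fin d)))
    (fun u => g (u + x)) t
  rw [h1]
  rw [finrank_euclideanSpace_fin, abs_of_pos (by positivity), smul_eq_mul] at h2
  have h3 : ∫ u, g (u + x) = t ^ d * ∫ y, g (t • y + x) := by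
    rw [h2]; field_simp
  rw [h3, ← integral_const_mul]
  congr 1
  ext y
  simp only [hg, add_sub_cancel_right, norm_smul, Real.norm_eq_abs, abs_of_pos ht]
  have e : t ^ 2 + (t * ‖y‖) ^ 2 = t ^ 2 * (1 + ‖y‖ ^ 2) := by ring
  rw [e, Real.mul_rpow (by positivity) (by positivity), ← Real.rpow_natCast t 2,
    ← Real.rpow_mul ht.le, ← Real.rpow_natCast t d]
  have : t ^ (d : ℝ) * (t ^ m * t ^ (((2 : ℕ) : ℝ) * (-(m + d) / 2))) = 1 := by
    rw [← Real.rpow_add ht, ← Real.rpow_add ht]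
    convert Real.rpow_zero t using 2
    push_cast; ring
  linear_combination (-f (t • y + x) * (1 + ‖y‖ ^ 2) ^ (-(m + d) / 2)) * this

theorem R_expand {d : ℕ} (u x : EuclideanSpace ℝ (Fin d)) (i : Fin d) (h : ℝ) :
    ‖u - (x + h • EuclideanSpace.single i 1)‖ ^ 2 = ‖u - x‖ ^ 2 - 2 * h * (u - x) i + h ^ 2 := by
  rw [← sub_sub, norm_sub_sq_real, norm_smul, inner_smul_right, EuclideanSpace.inner_single_right]
  simp
  ring

/-- Harmonicity of `Q_t^{(m)} f`: for `m > 0` and smooth compactly supported `f`,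
the function `F(t,x) = Q_t^{(m)} f(x)` on `(0,∞)×ℝ^d` satisfies
`Δ_x F + ∂²_{tt} F + ((1−m)/t) ∂_t F = 0`. -/
theorem Qop_harmonic (d : ℕ) (hd : 1 ≤ d) (m : ℝ) (hm : 0 < m)
    (f : EuclideanSpace ℝ (Fin d) → ℝ) (hf : ContDiff ℝ (⊤ : ℕ∞) f)
    (hsupp : HasCompactSupport f) (t : ℝ) (ht : 0 < t) (x : EuclideanSpace ℝ (Fin d)) :
    (∑ i : Fin d,
        deriv (deriv fun h : ℝ => Qop d m f t (x + h • EuclideanSpace.single i 1)) 0)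
      + deriv (deriv fun s : ℝ => Qop d m f s x) t
      + (1 - m) / t * deriv (fun s : ℝ => Qop d m f s x) t = 0 := by
  have hfc := hf.continuous
  set C := ∫ y : EuclideanSpace ℝ (Fin d), (1 + ‖y‖ ^ 2) ^ (-(m + d) / 2) with hC
  set b : ℝ := -(m + d) / 2 with hb
  -- time derivatives
  have T1 : ∀ s ∈ Set.Ioi (0 : ℝ), HasDerivAt (fun s : ℝ => Qop d m f s x)
      ((∫ u, f u * (m * s ^ (m - 1) * (s ^ 2 + ‖u - x‖ ^ 2) ^ b
        + s ^ m * (2 * s * b * (s ^ 2 + ‖u - x‖ ^ 2) ^ (b - 1)))) / C) s := by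
    intro s hs
    have := (aux_deriv (μ := volume) f hfc hsupp (Set.Ioi 0) isOpen_Ioi
      (fun s u => s ^ m * (s ^ 2 + ‖u - x‖ ^ 2) ^ b)
      (fun s u => m * s ^ (m - 1) * (s ^ 2 + ‖u - x‖ ^ 2) ^ b
        + s ^ m * (2 * s * b * (s ^ 2 + ‖u - x‖ ^ 2) ^ (b - 1))) ?_ ?_ ?_ s hs).div_const C
    · refine this.congr_of_eventuallyEq ?_
      filter_upwards [Ioi_mem_nhds hs] with r hr
      exact Qop_eq d m f r hr x
    · intro s hs
      have hs : 0 < s := hs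
      refine continuous_const.mul (Continuous.rpow_const (by fun_prop) fun u => Or.inl ?_)
      positivity
    · rintro ⟨s, u⟩ ⟨hs, -⟩
      have hs : 0 < s := hs
      have hR : s ^ 2 + ‖u - x‖ ^ 2 ≠ 0 := by positivity
      apply ContinuousAt.continuousWithinAt
      fun_prop (disch := first | exact Or.inl hs.ne' | exact Or.inl hR)
    · intro s hs u
      have hs : 0 < s := hs
      have hR : s ^ 2 + ‖u - x‖ ^ 2 ≠ 0 := by positivity
      have h1 := (hasDerivAt_id s).rpow_const (p := m) (Or.inl hs.ne')
      have h2 := (((hasDerivAt_id s).pow 2).add_const (‖u - x‖ ^ 2)).rpow_const (p := b) (Or.inl hR)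
      refine (h1.mul h2).congr_deriv ?_
      simp
  have T2 : HasDerivAt (deriv fun s : ℝ => Qop d m f s x)
      ((∫ u, f u * (m * ((m - 1) * t ^ (m - 2)) * (t ^ 2 + ‖u - x‖ ^ 2) ^ b
        + m * t ^ (m - 1) * (2 * t * b * (t ^ 2 + ‖u - x‖ ^ 2) ^ (b - 1))
        + (m * t ^ (m - 1) * (2 * t * b * (t ^ 2 + ‖u - x‖ ^ 2) ^ (b - 1))
        + t ^ m * (2 * b * (t ^ 2 + ‖u - x‖ ^ 2) ^ (b - 1)
          + 2 * t * b * (2 * t * (b - 1) * (t ^ 2 + ‖u - x‖ ^ 2) ^ (b - 2)))))) / C) t := by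
    have := (aux_deriv (μ := volume) f hfc hsupp (Set.Ioi 0) isOpen_Ioi
      (fun s u => m * s ^ (m - 1) * (s ^ 2 + ‖u - x‖ ^ 2) ^ b
        + s ^ m * (2 * s * b * (s ^ 2 + ‖u - x‖ ^ 2) ^ (b - 1)))
      (fun t u => m * ((m - 1) * t ^ (m - 2)) * (t ^ 2 + ‖u - x‖ ^ 2) ^ b
        + m * t ^ (m - 1) * (2 * t * b * (t ^ 2 + ‖u - x‖ ^ 2) ^ (b - 1))
        + (m * t ^ (m - 1) * (2 * t * b * (t ^ 2 + ‖u - x‖ ^ 2) ^ (b - 1))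
        + t ^ m * (2 * b * (t ^ 2 + ‖u - x‖ ^ 2) ^ (b - 1)
          + 2 * t * b * (2 * t * (b - 1) * (t ^ 2 + ‖u - x‖ ^ 2) ^ (b - 2))))) ?_ ?_ ?_ t ht).div_const C
    · refine this.congr_of_eventuallyEq ?_
      filter_upwards [Ioi_mem_nhds ht] with r hr
      exact (T1 r hr).deriv
    · intro s hs
      have hs : 0 < s := hs
      have hR : ∀ u, s ^ 2 + ‖u - x‖ ^ 2 ≠ 0 := fun u => by positivity
      rw [continuous_iff_continuousAt]
      intro u
      fun_prop (disch := first | exact Or.inl hs.ne' | exact Or.inl (hR _))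
    · rintro ⟨s, u⟩ ⟨hs, -⟩
      have hs : 0 < s := hs
      have hR : s ^ 2 + ‖u - x‖ ^ 2 ≠ 0 := by positivity
      apply ContinuousAt.continuousWithinAt
      fun_prop (disch := first | exact Or.inl hs.ne' | exact Or.inl hR)
    · intro s hs u
      have hs : 0 < s := hs
      have hR : s ^ 2 + ‖u - x‖ ^ 2 ≠ 0 := by positivity
      have h1 := (hasDerivAt_id s).rpow_const (p := m) (Or.inl hs.ne')
      have h1' := ((hasDerivAt_id s).rpow_const (p := m - 1) (Or.inl hs.ne')).const_mul m
      have h2 := (((hasDerivAt_id s).pow 2).add_const (‖u - x‖ ^ 2)).rpow_const (p := b) (Or.inl hR)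
      have h3 := (((hasDerivAt_id s).pow 2).add_const (‖u - x‖ ^ 2)).rpow_const (p := b - 1) (Or.inl hR)
      have h4 := (((hasDerivAt_id s).const_mul 2).mul_const b).mul h3
      refine ((h1'.mul h2).add (h1.mul h4)).congr_deriv ?_
      have e1 : m - 1 - 1 = m - 2 := by ring
      have e2 : b - 1 - 1 = b - 2 := by ring
      simp [e1, e2]
  -- space derivatives
  have hRpos : ∀ (i : Fin d) (h : ℝ) (u : EuclideanSpace ℝ (Fin d)),
      t ^ 2 + (‖u - x‖ ^ 2 - 2 * h * (u - x) i + h ^ 2) ≠ 0 := by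
    intro i h u
    rw [← R_expand]; positivity
  have X1 : ∀ (i : Fin d) (h : ℝ),
      HasDerivAt (fun h : ℝ => Qop d m f t (x + h • EuclideanSpace.single i 1))
      ((∫ u, f u * (t ^ m * ((-2 * (u - x) i + 2 * h) * b *
        (t ^ 2 + (‖u - x‖ ^ 2 - 2 * h * (u - x) i + h ^ 2)) ^ (b - 1)))) / C) h := by
    intro i h
    have := (aux_deriv (μ := volume) f hfc hsupp Set.univ isOpen_univ
      (fun h u => t ^ m * (t ^ 2 + (‖u - x‖ ^ 2 - 2 * h * (u - x) i + h ^ 2)) ^ b)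
      (fun h u => t ^ m * ((-2 * (u - x) i + 2 * h) * b *
        (t ^ 2 + (‖u - x‖ ^ 2 - 2 * h * (u - x) i + h ^ 2)) ^ (b - 1)))
      ?_ ?_ ?_ h trivial).div_const C
    · refine this.congr_of_eventuallyEq (Filter.Eventually.of_forall fun r => ?_)
      simp only [Qop_eq d m f t ht, R_expand]
      rfl
    · intro s _
      rw [continuous_iff_continuousAt]
      intro u
      have := hRpos i s u
      simp only [PiLp.sub_apply] at this ⊢
      fun_prop (disch := exact Or.inl this)
    · rintro ⟨s, u⟩ -
      apply ContinuousAt.continuousWithinAt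
      have := hRpos i s u
      simp only [PiLp.sub_apply] at this ⊢
      fun_prop (disch := exact Or.inl this)
    · intro s _ u
      have h0 := ((((((hasDerivAt_id s).const_mul 2).mul_const ((u - x) i)).const_sub
        (‖u - x‖ ^ 2)).add ((hasDerivAt_id s).pow 2)).const_add (t ^ 2)).rpow_const
        (p := b) (Or.inl (hRpos i s u))
      refine (h0.const_mul (t ^ m)).congr_deriv ?_
      simp
  have X2 : ∀ (i : Fin d),
      HasDerivAt (deriv fun h : ℝ => Qop d m f t (x + h • EuclideanSpace.single i 1))
      ((∫ u, f u * (t ^ m * (2 * b * (t ^ 2 + ‖u - x‖ ^ 2) ^ (b - 1)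
        + 4 * b * (b - 1) * (u - x) i ^ 2 * (t ^ 2 + ‖u - x‖ ^ 2) ^ (b - 2)))) / C) 0 := by
    intro i
    have := (aux_deriv (μ := volume) f hfc hsupp Set.univ isOpen_univ
      (fun h u => t ^ m * ((-2 * (u - x) i + 2 * h) * b *
        (t ^ 2 + (‖u - x‖ ^ 2 - 2 * h * (u - x) i + h ^ 2)) ^ (b - 1)))
      (fun h u => t ^ m * (2 * b *
        (t ^ 2 + (‖u - x‖ ^ 2 - 2 * h * (u - x) i + h ^ 2)) ^ (b - 1)
        + (-2 * (u - x) i + 2 * h) * b * ((-2 * (u - x) i + 2 * h) * (b - 1) *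
        (t ^ 2 + (‖u - x‖ ^ 2 - 2 * h * (u - x) i + h ^ 2)) ^ (b - 2))))
      ?_ ?_ ?_ 0 trivial).div_const C
    · rw [funext fun h => (X1 i h).deriv]
      refine this.congr_deriv ?_
      congr 2
      ext u
      have e : t ^ 2 + (‖u - x‖ ^ 2 - 2 * 0 * (u - x) i + 0 ^ 2) = t ^ 2 + ‖u - x‖ ^ 2 := by ring
      rw [e]
      ring
    · intro s _
      rw [continuous_iff_continuousAt]
      intro u
      have := hRpos i s u
      simp only [PiLp.sub_apply] at this ⊢
      fun_prop (disch := exact Or.inl this)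
    · rintro ⟨s, u⟩ -
      apply ContinuousAt.continuousWithinAt
      have := hRpos i s u
      simp only [PiLp.sub_apply] at this ⊢
      fun_prop (disch := exact Or.inl this)
    · intro s _ u
      have h0 := ((((((hasDerivAt_id s).const_mul 2).mul_const ((u - x) i)).const_sub
        (‖u - x‖ ^ 2)).add ((hasDerivAt_id s).pow 2)).const_add (t ^ 2)).rpow_const
        (p := b - 1) (Or.inl (hRpos i s u))
      have h1 := (((hasDerivAt_id s).const_mul 2).const_add (-2 * (u - x) i)).mul_const b
      refine ((h1.mul h0).const_mul (t ^ m)).congr_deriv ?_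
      have e2 : b - 1 - 1 = b - 2 := by ring
      simp [e2]
  clear_value C b
  rw [T2.deriv, (T1 t ht).deriv, Finset.sum_congr rfl fun i _ => (X2 i).deriv]
  have hR : ∀ u, t ^ 2 + ‖u - x‖ ^ 2 ≠ 0 := fun u => by positivity
  have hint : ∀ g : EuclideanSpace ℝ (Fin d) → ℝ, Continuous g →
      Integrable (fun u => f u * g u) := fun g hg =>
    (hfc.mul hg).integrable_of_hasCompactSupport hsupp.mul_right
  have hcr : ∀ p : ℝ, Continuous fun u => (t ^ 2 + ‖u - x‖ ^ 2) ^ p := fun p =>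
    Continuous.rpow_const (by fun_prop) fun u => Or.inl (hR u)
  have hc0 := hcr b
  have hc1 := hcr (b - 1)
  have hc2 := hcr (b - 2)
  rw [← Finset.sum_div, ← integral_finsetSum, mul_div_assoc', ← integral_const_mul, ← add_div,
    ← add_div, ← integral_add, ← integral_add]
  · rw [div_eq_zero_iff]; left
    rw [← integral_zero (EuclideanSpace ℝ (Fin d)) ℝ]
    congr 1
    ext u
    have hn : ‖u - x‖ ^ 2 = ∑ i, (u - x) i ^ 2 := EuclideanSpace.real_norm_sq_eq _
    have hsum : ∑ i, f u * (t ^ m * (2 * b * (t ^ 2 + ‖u - x‖ ^ 2) ^ (b - 1)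
        + 4 * b * (b - 1) * (u - x) i ^ 2 * (t ^ 2 + ‖u - x‖ ^ 2) ^ (b - 2)))
        = f u * (t ^ m * (d * (2 * b * (t ^ 2 + ‖u - x‖ ^ 2) ^ (b - 1))
        + 4 * b * (b - 1) * ‖u - x‖ ^ 2 * (t ^ 2 + ‖u - x‖ ^ 2) ^ (b - 2))) := by
      rw [← Finset.mul_sum, ← Finset.mul_sum, Finset.sum_add_distrib, Finset.sum_const,
        ← Finset.sum_mul, ← Finset.mul_sum, ← hn, Finset.card_univ, Fintype.card_fin, nsmul_eq_mul]
    rw [hsum]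
    have hRp : 0 < t ^ 2 + ‖u - x‖ ^ 2 := by positivity
    generalize ‖u - x‖ ^ 2 = N at *
    have p1 : (t ^ 2 + N) ^ (b - 1) = (t ^ 2 + N) ^ (b - 2) * (t ^ 2 + N) := by
      rw [← Real.rpow_add_one hRp.ne']; congr 1; ring
    have p2 : (t ^ 2 + N) ^ b = (t ^ 2 + N) ^ (b - 2) * (t ^ 2 + N) * (t ^ 2 + N) := by
      rw [← p1, ← Real.rpow_add_one hRp.ne']; congr 1; ring
    have q1 : t ^ (m - 1) = t ^ (m - 2) * t := by
      rw [← Real.rpow_add_one ht.ne']; congr 1; ring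
    have q2 : t ^ m = t ^ (m - 2) * t * t := by
      rw [← q1, ← Real.rpow_add_one ht.ne']; congr 1; ring
    rw [p2, p1, q2, q1]
    have hd' : (d : ℝ) = -2 * b - m := by rw [hb]; ring
    rw [hd']
    field_simp
    ring
  · refine Integrable.add (integrable_finsetSum _ fun i _ => ?_) ?_
    · apply hint; simp only [PiLp.sub_apply]; fun_prop
    · apply hint; fun_prop
  · apply Integrable.const_mul
    apply hint; fun_prop
  · refine integrable_finsetSum _ fun i _ => ?_
    apply hint; simp only [PiLp.sub_apply]; fun_prop
  · apply hint; fun_prop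
  · intro i _
    apply hint; simp only [PiLp.sub_apply]; fun_prop
end

section
/- For m > 0, t > 0, the subordination identity holds: Q_t^{(m)}f(x) = ∫_0^∞ P_s f(x) σ_m(s,t) ds for every bounded continuous f : ℝ^d → ℝ, where P_s f(x) = ∫ f(y) exp(−|x−y|²/(4s)) (4πs)^{−d/2} dy is the heat semigroup (generator Δ) and σ_m(s,t) = (1/(2^m Γ(m/2))) t^m exp(−t²/(4s)) s^{−m/2−1}. -/
open MeasureTheory

/-- The heat semigroup on `ℝ^d` (generator the Laplacian `Δ`):
`P_s f(x) = ∫ f(y) exp(−|x−y|²/(4s)) (4πs)^{−d/2} dy`. -/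
noncomputable def heatOp (d : ℕ) (s : ℝ) (f : EuclideanSpace ℝ (Fin d) → ℝ)
    (x : EuclideanSpace ℝ (Fin d)) : ℝ :=
  ∫ y : EuclideanSpace ℝ (Fin d),
    f y * Real.exp (-‖x - y‖ ^ 2 / (4 * s)) / (4 * Real.pi * s) ^ ((d : ℝ) / 2)

/-- The Bessel hitting-time density
`σ_m(s,t) = (1/(2^m Γ(m/2))) t^m exp(−t²/(4s)) s^{−m/2−1}`. -/
noncomputable def besselHittingDensity (m t s : ℝ) : ℝ :=
  (1 / (2 ^ m * Real.Gamma (m / 2))) * t ^ m * Real.exp (-t ^ 2 / (4 * s)) *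
    s ^ (-m / 2 - 1)

theorem aux_inv_gamma (A p : ℝ) (hA : 0 < A) (hp : 0 < p) :
    IntegrableOn (fun s : ℝ => Real.exp (-A / s) * s ^ (-p - 1)) (Set.Ioi 0) ∧
    ∫ s in Set.Ioi (0 : ℝ), Real.exp (-A / s) * s ^ (-p - 1) = A ^ (-p) * Real.Gamma p := by
  have key : ∀ s ∈ Set.Ioi (0 : ℝ),
      (|(-1 : ℝ)| * s ^ ((-1 : ℝ) - 1)) •
        ((fun u : ℝ => u ^ (p - 1) * Real.exp (-(A * u))) (s ^ (-1 : ℝ))) =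
      Real.exp (-A / s) * s ^ (-p - 1) := by
    intro s hs
    have hs' : (0 : ℝ) < s := hs
    simp only [smul_eq_mul, abs_neg, abs_one, one_mul]
    rw [← Real.rpow_mul hs'.le, Real.rpow_neg_one]
    rw [← mul_assoc, ← Real.rpow_add hs']
    rw [mul_comm]
    congr 2 <;> ring
  have hg := Real.integral_rpow_mul_exp_neg_mul_Ioi hp hA
  have hI : IntegrableOn (fun u : ℝ => u ^ (p - 1) * Real.exp (-(A * u))) (Set.Ioi 0) := by
    refine (Integrable.of_integral_ne_zero ?_)
    rw [hg]
    have := Real.Gamma_pos_of_pos hp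
    positivity
  constructor
  · have h := (integrableOn_Ioi_comp_rpow_iff
      (fun u : ℝ => u ^ (p - 1) * Real.exp (-(A * u))) (p := -1) (by norm_num)).2 hI
    exact h.congr_fun key measurableSet_Ioi
  · rw [← setIntegral_congr_fun measurableSet_Ioi key,
      integral_comp_rpow_Ioi (fun u : ℝ => u ^ (p - 1) * Real.exp (-(A * u)))
      (p := -1) (by norm_num), hg, Real.rpow_neg hA.le, one_div, Real.inv_rpow hA.le]

theorem aux_heat (d : ℕ) (m t : ℝ) (ht : 0 < t)
    (f : EuclideanSpace ℝ (Fin d) → ℝ) (x : EuclideanSpace ℝ (Fin d)) (s : ℝ) (hs : 0 < s) :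
    heatOp d s f x * besselHittingDensity m t s =
      ∫ y : EuclideanSpace ℝ (Fin d), f (t • y + x) *
        ((t ^ d * (4 * Real.pi) ^ (-((d : ℝ) / 2)) * (1 / (2 ^ m * Real.Gamma (m / 2))) * t ^ m) *
        (Real.exp (-(t ^ 2 / 4 * (1 + ‖y‖ ^ 2)) / s) * s ^ (-((m + d) / 2) - 1))) := by
  unfold heatOp
  set g : EuclideanSpace ℝ (Fin d) → ℝ := fun y =>
    f y * Real.exp (-‖x - y‖ ^ 2 / (4 * s)) / (4 * Real.pi * s) ^ ((d : ℝ) / 2) with hg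
  have h1 : ∫ y, g y = t ^ d * ∫ y, g (t • y + x) := by
    have h2 := Measure.integral_comp_smul volume (fun y => g (y + x)) t
    rw [integral_add_right_eq_self g x] at h2
    rw [h2]
    simp only [finrank_euclideanSpace, Fintype.card_fin, smul_eq_mul]
    rw [abs_of_pos (by positivity)]
    field_simp
  rw [h1, mul_comm (t ^ d), mul_assoc, ← integral_mul_const]
  congr 1
  ext y
  simp only [hg, besselHittingDensity]
  have e1 : x - (t • y + x) = - (t • y) := by abel
  rw [e1, norm_neg, norm_smul, Real.norm_of_nonneg ht.le]
  have e2 : Real.exp (-(t ^ 2 / 4 * (1 + ‖y‖ ^ 2)) / s) =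
      Real.exp (-(t * ‖y‖) ^ 2 / (4 * s)) * Real.exp (-t ^ 2 / (4 * s)) := by
    rw [← Real.exp_add]; congr 1; field_simp; ring
  have e3 : s ^ (-((m + d) / 2) - 1) = s ^ (-m / 2 - 1) * s ^ (-((d : ℝ) / 2)) := by
    rw [← Real.rpow_add hs]; congr 1; ring
  rw [e2, e3, Real.mul_rpow (by positivity) hs.le, Real.rpow_neg (by positivity),
    Real.rpow_neg hs.le]
  rw [div_eq_mul_inv, mul_inv]
  ring

theorem aux_fubini (d : ℕ) (m t : ℝ) (hm : 0 < m) (ht : 0 < t)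
    (x : EuclideanSpace ℝ (Fin d)) :
    ∃ K : ℝ, ∀ f : EuclideanSpace ℝ (Fin d) → ℝ, Continuous f → (∃ C, ∀ y, |f y| ≤ C) →
      ∫ s in Set.Ioi (0 : ℝ), heatOp d s f x * besselHittingDensity m t s =
      K * ∫ y : EuclideanSpace ℝ (Fin d), f (t • y + x) * (1 + ‖y‖ ^ 2) ^ (-(m + d) / 2) := by
  set K : ℝ := t ^ d * (4 * Real.pi) ^ (-((d : ℝ) / 2)) *
    (1 / (2 ^ m * Real.Gamma (m / 2))) * t ^ m with hK
  set p : ℝ := (m + d) / 2 with hp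
  have hp0 : 0 < p := by positivity
  refine ⟨K * (t ^ 2 / 4) ^ (-p) * Real.Gamma p, ?_⟩
  rintro f hf ⟨C, hC⟩
  rw [setIntegral_congr_fun measurableSet_Ioi
    (fun s hs => aux_heat d m t ht f x s hs)]
  simp only [← hK, ← hp]
  have hA : ∀ y : EuclideanSpace ℝ (Fin d), 0 < t ^ 2 / 4 * (1 + ‖y‖ ^ 2) := fun y => by positivity
  have hsplit : ∀ y : EuclideanSpace ℝ (Fin d), (t ^ 2 / 4 * (1 + ‖y‖ ^ 2)) ^ (-p) =
      (t ^ 2 / 4) ^ (-p) * (1 + ‖y‖ ^ 2) ^ (-(m + d) / 2) := fun y => by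
    rw [Real.mul_rpow (by positivity) (by positivity)]; congr 2; rw [hp]; ring
  have hint0 : Integrable (fun y : EuclideanSpace ℝ (Fin d) =>
      (1 + ‖y‖ ^ 2) ^ (-(m + d) / 2)) :=
    integrable_rpow_neg_one_add_norm_sq (by simp; exact hm)
  have hintf : Integrable (fun y : EuclideanSpace ℝ (Fin d) =>
      f (t • y + x) * (1 + ‖y‖ ^ 2) ^ (-(m + d) / 2)) :=
    hint0.bdd_mul (c := C) (by fun_prop) (Filter.Eventually.of_forall fun y => hC _)
  have hmeas : Measurable (fun z : ℝ × EuclideanSpace ℝ (Fin d) => f (t • z.2 + x) *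
      (K * (Real.exp (-(t ^ 2 / 4 * (1 + ‖z.2‖ ^ 2)) / z.1) * z.1 ^ (-p - 1)))) := by
    have := hf.measurable
    fun_prop
  rw [integral_integral_swap]
  · rw [← integral_const_mul]
    congr 1
    ext y
    rw [integral_const_mul, integral_const_mul, (aux_inv_gamma _ p (hA y) hp0).2, hsplit]
    ring
  · refine (integrable_prod_iff' hmeas.aestronglyMeasurable).2 ⟨?_, ?_⟩
    · refine Filter.Eventually.of_forall fun y => ?_
      exact ((aux_inv_gamma _ p (hA y) hp0).1.const_mul K).const_mul (f (t • y + x))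
    · have e : ∀ y : EuclideanSpace ℝ (Fin d), ∫ s in Set.Ioi (0 : ℝ), ‖f (t • y + x) *
          (K * (Real.exp (-(t ^ 2 / 4 * (1 + ‖y‖ ^ 2)) / s) * s ^ (-p - 1)))‖ =
          (|K| * (t ^ 2 / 4) ^ (-p) * Real.Gamma p) *
            ‖f (t • y + x) * (1 + ‖y‖ ^ 2) ^ (-(m + d) / 2)‖ := by
        intro y
        have : ∀ s ∈ Set.Ioi (0 : ℝ), ‖f (t • y + x) *
          (K * (Real.exp (-(t ^ 2 / 4 * (1 + ‖y‖ ^ 2)) / s) * s ^ (-p - 1)))‖ =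
          |f (t • y + x)| * (|K| *
            (Real.exp (-(t ^ 2 / 4 * (1 + ‖y‖ ^ 2)) / s) * s ^ (-p - 1))) := by
          intro s hs
          have hs' : (0 : ℝ) < s := hs
          rw [Real.norm_eq_abs, abs_mul, abs_mul,
            abs_of_nonneg (a := Real.exp _ * _) (by positivity)]
        rw [setIntegral_congr_fun measurableSet_Ioi this, integral_const_mul, integral_const_mul,
          (aux_inv_gamma _ p (hA y) hp0).2, hsplit, Real.norm_eq_abs, abs_mul (f (t • y + x)),
          abs_of_nonneg (a := (1 + ‖y‖ ^ 2) ^ (-(m + d) / 2)) (by positivity)]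
        ring
      simp_rw [e]
      exact hintf.norm.const_mul _

theorem aux_heat_one (d : ℕ) (x : EuclideanSpace ℝ (Fin d)) (s : ℝ) (hs : 0 < s) :
    heatOp d s (fun _ => 1) x = 1 := by
  unfold heatOp
  have h := GaussianFourier.integral_rexp_neg_mul_sq_norm
    (V := EuclideanSpace ℝ (Fin d)) (b := 1 / (4 * s)) (by positivity)
  rw [← integral_sub_left_eq_self _ volume x] at h
  simp only [one_mul]
  rw [integral_div]
  have e : ∀ y : EuclideanSpace ℝ (Fin d), -‖x - y‖ ^ 2 / (4 * s) =
    -(1 / (4 * s)) * ‖x - y‖ ^ 2 := fun y => by ring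
  simp_rw [e]
  rw [h]
  have e2 : Real.pi / (1 / (4 * s)) = 4 * Real.pi * s := by field_simp
  rw [e2]
  simp only [finrank_euclideanSpace, Fintype.card_fin]
  have hpi := Real.pi_pos
  exact div_self (by positivity)

theorem aux_density (m t : ℝ) (hm : 0 < m) (ht : 0 < t) :
    ∫ s in Set.Ioi (0 : ℝ), besselHittingDensity m t s = 1 := by
  have h := (aux_inv_gamma (t ^ 2 / 4) (m / 2) (by positivity) (by positivity)).2
  have e : ∀ s : ℝ, besselHittingDensity m t s = ((1 / (2 ^ m * Real.Gamma (m / 2))) * t ^ m) *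
      (Real.exp (-(t ^ 2 / 4) / s) * s ^ (-(m / 2) - 1)) := by
    intro s
    unfold besselHittingDensity
    rw [show -t ^ 2 / (4 * s) = -(t ^ 2 / 4) / s by rw [mul_comm, ← div_div]; ring,
      show -m / 2 - 1 = -(m / 2) - 1 by ring]
    ring
  simp_rw [e]
  rw [integral_const_mul, h]
  have e3 : (t ^ 2 / 4) ^ (-(m / 2)) = (t ^ m)⁻¹ * 2 ^ m := by
    rw [show t ^ 2 / 4 = (t / 2) ^ (2 : ℝ) by rw [Real.rpow_two]; ring,
      ← Real.rpow_mul (by positivity), show 2 * (-(m / 2)) = -m by ring,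
      Real.rpow_neg (by positivity), Real.div_rpow ht.le (by norm_num), inv_div, div_eq_mul_inv,
      mul_comm]
  rw [e3]
  have hG := Real.Gamma_pos_of_pos (half_pos hm)
  have : (0 : ℝ) < t ^ m := by positivity
  have : (0 : ℝ) < 2 ^ m := by positivity
  field_simp

/-- Subordination identity: for `m > 0`, `t > 0`, and every bounded continuous `f`,
`Q_t^{(m)} f(x) = ∫_0^∞ P_s f(x) σ_m(s,t) ds`. -/
theorem Qop_subordination (d : ℕ) (hd : 1 ≤ d) (m t : ℝ) (hm : 0 < m) (ht : 0 < t)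
    (f : EuclideanSpace ℝ (Fin d) → ℝ) (hf : Continuous f) (hb : ∃ C, ∀ y, |f y| ≤ C)
    (x : EuclideanSpace ℝ (Fin d)) :
    Qop d m f t x =
      ∫ s in Set.Ioi (0 : ℝ), heatOp d s f x * besselHittingDensity m t s := by
  obtain ⟨K, hK⟩ := aux_fubini d m t hm ht x
  have h1 := hK (fun _ => 1) continuous_const ⟨1, fun _ => by simp⟩
  have h2 : ∫ s in Set.Ioi (0 : ℝ), heatOp d s (fun _ => 1) x * besselHittingDensity m t s
      = 1 := by
    refine Eq.trans ?_ (aux_density m t hm ht)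
    refine setIntegral_congr_fun measurableSet_Ioi fun s hs => ?_
    have := aux_heat_one d x s hs
    beta_reduce
    rw [this, one_mul]
  rw [h2] at h1
  simp only [one_mul] at h1
  rw [hK f hf hb, Qop]
  have h0 : (∫ y : EuclideanSpace ℝ (Fin d), (1 + ‖y‖ ^ 2) ^ (-(m + d) / 2)) ≠ 0 := by
    intro h
    rw [h, mul_zero] at h1
    exact one_ne_zero h1
  rw [div_eq_iff h0, mul_right_comm, ← h1, one_mul]
end

section
/- (Beckner inequality for the Cauchy distribution) For b ≥ d+1, p ∈ [1 + 1/(b−d), 2], and any smooth nonnegative f with the relevant integrals finite, (p/(p−1))[∫ f² dν_b − (∫ f^{2/p} dν_b)^p] ≤ (1/(b−1)) ∫ |∇f|² (1+|y|²) dν_b. -/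
open MeasureTheory

/-- The generalized Cauchy probability measure `ν_b` on `ℝ^d`, with density
proportional to `(1+|y|²)^{-b}`. -/
noncomputable def cauchyMeasure (d : ℕ) (b : ℝ) : Measure (EuclideanSpace ℝ (Fin d)) :=
  volume.withDensity fun y =>
    ENNReal.ofReal ((1 + ‖y‖ ^ 2) ^ (-b) /
      ∫ z : EuclideanSpace ℝ (Fin d), (1 + ‖z‖ ^ 2) ^ (-b))


abbrev Eu (d : ℕ) := EuclideanSpace ℝ (Fin d)

noncomputable def cZ (d : ℕ) (b : ℝ) : ℝ := ∫ z : Eu d, (1 + ‖z‖ ^ 2) ^ (-b)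

lemma one_add_pos' {d : ℕ} (y : Eu d) : 0 < 1 + ‖y‖ ^ 2 := by positivity

lemma integrable_J {d : ℕ} {b : ℝ} (hb : (d : ℝ) < 2 * b) :
    Integrable (fun y : Eu d => (1 + ‖y‖ ^ 2) ^ (-b)) := by
  have := integrable_rpow_neg_one_add_norm_sq (E := Eu d) (μ := volume) (r := 2 * b)
    (by simpa using hb)
  convert this using 3
  ring

lemma continuous_J {d : ℕ} (b : ℝ) : Continuous (fun y : Eu d => (1 + ‖y‖ ^ 2) ^ (-b)) := by
  refine Continuous.rpow_const (by fun_prop) (fun y => Or.inl (one_add_pos' y).ne')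

lemma cZ_pos {d : ℕ} {b : ℝ} (hb : (d : ℝ) < 2 * b) : 0 < cZ d b := by
  unfold cZ
  rw [integral_pos_iff_support_of_nonneg (fun y => by have := one_add_pos' y; positivity)
    (integrable_J hb)]
  have : Function.support (fun y : Eu d => (1 + ‖y‖ ^ 2) ^ (-b)) = Set.univ := by
    ext y
    have := one_add_pos' y
    simp only [Function.mem_support, Set.mem_univ, iff_true]
    positivity
  rw [this]
  exact Measure.measure_univ_pos.2 (NeZero.ne _)

lemma density_meas (d : ℕ) (b : ℝ) : Measurable (fun y : Eu d =>
    ENNReal.ofReal ((1 + ‖y‖ ^ 2) ^ (-b) / ∫ z : Eu d, (1 + ‖z‖ ^ 2) ^ (-b))) :=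
  ((continuous_J b).div_const _).measurable.ennreal_ofReal

lemma integral_cauchy {d : ℕ} {b : ℝ} (hb : (d : ℝ) < 2 * b) (h : Eu d → ℝ) :
    ∫ y, h y ∂(cauchyMeasure d b) = (cZ d b)⁻¹ * ∫ y, h y * (1 + ‖y‖ ^ 2) ^ (-b) := by
  unfold cauchyMeasure
  rw [integral_withDensity_eq_integral_toReal_smul (density_meas d b) (by simp),
    ← integral_const_mul]
  congr 1
  ext y
  have := one_add_pos' y
  have h2 := cZ_pos hb
  unfold cZ at h2 ⊢
  rw [ENNReal.toReal_ofReal (by positivity), smul_eq_mul]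
  ring

lemma integrable_cauchy {d : ℕ} {b : ℝ} (hb : (d : ℝ) < 2 * b) (h : Eu d → ℝ) :
    Integrable h (cauchyMeasure d b) ↔ Integrable (fun y => h y * (1 + ‖y‖ ^ 2) ^ (-b)) := by
  unfold cauchyMeasure
  rw [integrable_withDensity_iff (density_meas d b) (by simp)]
  have h2 := cZ_pos hb
  rw [← integrable_const_mul_iff (c := (cZ d b)⁻¹) (by simpa using h2.ne')
    (fun y => h y * (1 + ‖y‖ ^ 2) ^ (-b))]
  apply integrable_congr
  refine Filter.Eventually.of_forall fun y => ?_
  have := one_add_pos' y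
  unfold cZ at h2 ⊢
  simp only
  rw [ENNReal.toReal_ofReal (by positivity)]
  ring

lemma isProb {d : ℕ} {b : ℝ} (hb : (d : ℝ) < 2 * b) :
    IsProbabilityMeasure (cauchyMeasure d b) := by
  have h2 := cZ_pos hb
  have hi : Integrable (fun _ : Eu d => (1 : ℝ)) (cauchyMeasure d b) := by
    rw [integrable_cauchy hb]; simpa using integrable_J hb
  have : IsFiniteMeasure (cauchyMeasure d b) := by
    rw [integrable_const_iff] at hi
    simpa using hi
  have h1 : ∫ y, (1 : ℝ) ∂(cauchyMeasure d b) = 1 := by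
    rw [integral_cauchy hb]
    simp only [one_mul]
    exact inv_mul_cancel₀ h2.ne'
  constructor
  simp [Measure.real] at h1
  have := (ENNReal.toReal_eq_one_iff _).1 h1
  exact this

lemma cov {d : ℕ} (β : ℝ) (H : Eu d → ℝ) (z : Eu d) {w : ℝ} (hw : w ≠ 0) :
    ∫ y, H (z + w • y) * (1 + ‖y‖ ^ 2) ^ (-β) =
      |w| ^ (2 * β - d) * ∫ y, H y * (w ^ 2 + ‖y - z‖ ^ 2) ^ (-β) := by
  have hw' : 0 < |w| := abs_pos.2 hw
  have h1 : ∀ y : Eu d, H (z + w • y) * (1 + ‖y‖ ^ 2) ^ (-β) =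
      (fun x => H (z + x) * (1 + ‖x‖ ^ 2 / w ^ 2) ^ (-β)) (w • y) := by
    intro y
    simp only [norm_smul, mul_pow, Real.norm_eq_abs, sq_abs]
    rw [mul_div_cancel_left₀ _ (by positivity)]
  rw [integral_congr_ae (Filter.Eventually.of_forall h1), 
    Measure.integral_comp_smul volume
      (fun x : Eu d => H (z + x) * (1 + ‖x‖ ^ 2 / w ^ 2) ^ (-β)) w]
  rw [← integral_sub_right_eq_self _ z, smul_eq_mul, ← integral_const_mul, ← integral_const_mul]
  congr 1
  ext y
  have e1 : 1 + ‖y - z‖ ^ 2 / w ^ 2 = (w ^ 2 + ‖y - z‖ ^ 2) / |w| ^ (2 : ℝ) := by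
    rw [Real.rpow_two, sq_abs]; field_simp
  rw [e1, Real.div_rpow (by positivity) (by positivity), ← Real.rpow_mul (abs_nonneg w),
    add_sub_cancel, Real.rpow_sub hw', Real.rpow_natCast]
  rw [show (2 : ℝ) * -β = -(2 * β) by ring, Real.rpow_neg hw'.le, abs_inv, abs_pow]
  simp only [finrank_euclideanSpace, Fintype.card_fin]
  field_simp

lemma cov_int {d : ℕ} {b : ℝ} (hb : (d : ℝ) < 2 * b) (H : Eu d → ℝ) (z : Eu d)
    {w : ℝ} (hw : w ≠ 0) :
    ∫ y, H (z + w • y) ∂(cauchyMeasure d b) =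
      (cZ d b)⁻¹ * ∫ y, H y * (|w| ^ (2 * b - d) * (w ^ 2 + ‖y - z‖ ^ 2) ^ (-b)) := by
  rw [integral_cauchy hb, cov b H z hw]
  congr 1
  rw [← integral_const_mul]
  congr 1; ext y; ring

lemma cov_int2 {d : ℕ} {b : ℝ} (hb : (d : ℝ) < 2 * b) (H : Eu d → ℝ) (z : Eu d)
    {w : ℝ} (hw : w ≠ 0) :
    w ^ 2 * ∫ y, H (z + w • y) * (1 + ‖y‖ ^ 2) ∂(cauchyMeasure d b) =
      (cZ d b)⁻¹ * ∫ y, H y * (|w| ^ (2 * b - d) * (w ^ 2 + ‖y - z‖ ^ 2) ^ (-(b - 1))) := by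
  have hw' : 0 < |w| := abs_pos.2 hw
  have h1 : ∀ y : Eu d, H (z + w • y) * (1 + ‖y‖ ^ 2) * (1 + ‖y‖ ^ 2) ^ (-b) =
      H (z + w • y) * (1 + ‖y‖ ^ 2) ^ (-(b - 1)) := by
    intro y
    rw [show -(b - 1) = 1 + -b by ring, Real.rpow_add (one_add_pos' y), Real.rpow_one]
    ring
  rw [integral_cauchy hb]
  simp_rw [h1]
  rw [cov (b - 1) H z hw, mul_left_comm]
  congr 1
  rw [← mul_assoc, ← integral_const_mul]
  congr 1; ext y
  rw [show 2 * b - (d : ℝ) = 2 + (2 * (b - 1) - d) by ring, Real.rpow_add hw', Real.rpow_two,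
    sq_abs]
  ring


lemma inv_cov {d : ℕ} (hd : 1 ≤ d) {b s : ℝ} (a : Eu d) (has : ‖a‖ ^ 2 + s ^ 2 = 1)
    (hs : s ≠ 0) :
    ∫ y : Eu d, ‖y‖ ^ (2 * (b - d)) * (s ^ 2 + ‖y - a‖ ^ 2) ^ (-b) =
      ∫ y : Eu d, (s ^ 2 + ‖y - a‖ ^ 2) ^ (-b) := by
  have hne : Nonempty (Fin d) := ⟨⟨0, by omega⟩⟩
  have hT : ∀ y : Eu d, s ^ 2 + ‖y - a‖ ^ 2 = 1 + ‖y‖ ^ 2 - 2 * inner ℝ y a := by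
    intro y
    rw [norm_sub_sq_real]; linarith
  have hTpos : ∀ y : Eu d, 0 < s ^ 2 + ‖y - a‖ ^ 2 := fun y => by positivity
  set G : Eu d → ℝ := fun y => (s ^ 2 + ‖y - a‖ ^ 2) ^ (-b) with hG
  have hcompl : ∀ F : Eu d → ℝ, ∫ y in ({0}ᶜ : Set (Eu d)), F y = ∫ y, F y := by
    intro F
    rw [restrict_compl_singleton]
  rw [← hcompl, ← hcompl G]
  set ι : Eu d → Eu d := EuclideanGeometry.inversion 0 1 with hι
  have himg : ι '' {0}ᶜ = {0}ᶜ := by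
    ext y
    constructor
    · rintro ⟨x, hx, rfl⟩
      simp only [Set.mem_compl_iff, Set.mem_singleton_iff] at hx ⊢
      rw [hι, EuclideanGeometry.inversion_eq_center (by norm_num)]
      exact hx
    · intro hy
      refine ⟨ι y, ?_, EuclideanGeometry.inversion_inversion _ (by norm_num) _⟩
      simp only [Set.mem_compl_iff, Set.mem_singleton_iff] at hy ⊢
      rw [hι, EuclideanGeometry.inversion_eq_center (by norm_num)]
      exact hy
  have key := integral_image_eq_integral_abs_det_fderiv_smul (volume : Measure (Eu d))
    (s := {0}ᶜ) (f := ι)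
    (f' := fun x => (1 / dist x 0) ^ 2 •
      (((ℝ ∙ (x - 0))ᗮ.reflection : Eu d ≃ₗᵢ[ℝ] Eu d) : Eu d →L[ℝ] Eu d))
    (measurableSet_singleton 0).compl
    (fun x hx => (EuclideanGeometry.hasFDerivAt_inversion (by simpa using hx)).hasFDerivWithinAt)
    ((EuclideanGeometry.inversion_injective 0 (by norm_num)).injOn) G
  rw [himg] at key
  rw [key]
  refine setIntegral_congr_fun (measurableSet_singleton 0).compl fun x hx => ?_
  have hx0 : x ≠ 0 := by simpa using hx
  have hxn : 0 < ‖x‖ := norm_pos_iff.2 hx0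
  have hdet : |((1 / dist x 0) ^ 2 •
      (((ℝ ∙ (x - 0))ᗮ.reflection : Eu d ≃ₗᵢ[ℝ] Eu d) : Eu d →L[ℝ] Eu d)).det| =
      ‖x‖ ^ (-(2 * (d : ℝ))) := by
    rw [ContinuousLinearMap.det, ContinuousLinearMap.toLinearMap_smul, LinearMap.det_smul, abs_mul]
    have h1 : |LinearMap.det ((((ℝ ∙ (x - 0))ᗮ.reflection : Eu d ≃ₗᵢ[ℝ] Eu d) : Eu d →L[ℝ] Eu d) :
        Eu d →ₗ[ℝ] Eu d)| = 1 := by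
      have := Submodule.det_reflection (𝕜 := ℝ) (K := (ℝ ∙ (x - 0))ᗮ)
      erw [this]
      simp
    rw [h1, mul_one, dist_zero_right]
    simp only [finrank_euclideanSpace, Fintype.card_fin]
    rw [Real.rpow_neg hxn.le, show (2 * (d : ℝ)) = ((2 * d : ℕ) : ℝ) by push_cast; ring,
      Real.rpow_natCast, abs_of_nonneg (by positivity), ← pow_mul, one_div, inv_pow]
  have hιx : ι x = (1 / ‖x‖) ^ 2 • x := by
    simp [hι, EuclideanGeometry.inversion]
  have hTi : s ^ 2 + ‖ι x - a‖ ^ 2 = (s ^ 2 + ‖x - a‖ ^ 2) / ‖x‖ ^ (2 : ℝ) := by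
    rw [hT, hT, hιx, norm_smul, inner_smul_left, Real.rpow_two]
    simp
    field_simp
    ring
  simp only [hG, smul_eq_mul]
  rw [hdet, hTi, Real.div_rpow (hTpos x).le (by positivity), ← Real.rpow_mul hxn.le,
    show (2 : ℝ) * -b = -(2 * b) by ring, Real.rpow_neg hxn.le (2 * b), div_inv_eq_mul,
    show 2 * (b - (d : ℝ)) = -(2 * (d : ℝ)) + 2 * b by ring, Real.rpow_add hxn]
  ring

lemma norm_add_smul_sq {d : ℕ} {s : ℝ} (a y : Eu d) (has : ‖a‖ ^ 2 + s ^ 2 = 1) :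
    ‖a + s • y‖ ^ 2 ≤ 1 + ‖y‖ ^ 2 := by
  have h1 : ‖a + s • y‖ ≤ ‖a‖ + |s| * ‖y‖ := by
    refine (norm_add_le _ _).trans ?_
    rw [norm_smul, Real.norm_eq_abs]
  have h2 : ‖a + s • y‖ ^ 2 ≤ (‖a‖ + |s| * ‖y‖) ^ 2 := by gcongr
  have h3 : |s| ^ 2 = s ^ 2 := sq_abs s
  nlinarith [sq_nonneg (‖a‖ * ‖y‖ - |s|), norm_nonneg a, norm_nonneg y]

lemma moment {d : ℕ} (hd : 1 ≤ d) {b s : ℝ} (hb : (d : ℝ) + 1 ≤ b) (a : Eu d)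
    (has : ‖a‖ ^ 2 + s ^ 2 = 1) :
    Integrable (fun y => ‖a + s • y‖ ^ (2 * (b - d))) (cauchyMeasure d b) ∧
    ∫ y, ‖a + s • y‖ ^ (2 * (b - d)) ∂(cauchyMeasure d b) = 1 := by
  have hd' : (1 : ℝ) ≤ d := by exact_mod_cast hd
  have hb2 : (d : ℝ) < 2 * b := by linarith
  have := isProb hb2
  constructor
  · rw [integrable_cauchy hb2]
    refine (integrable_J (d := d) (b := d) (by linarith)).mono' ?_ ?_
    · refine Continuous.aestronglyMeasurable ?_
      refine Continuous.mul ?_ (continuous_J b)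
      exact Continuous.rpow_const (by fun_prop) (fun y => Or.inr (by linarith))
    · refine Filter.Eventually.of_forall fun y => ?_
      have h1 := one_add_pos' y
      rw [Real.norm_eq_abs, abs_of_nonneg (by positivity), Real.rpow_mul (norm_nonneg _),
        Real.rpow_two, show -(d : ℝ) = (b - d) + -b by ring, Real.rpow_add h1]
      gcongr
      · linarith
      · exact norm_add_smul_sq a y has
  · by_cases hs : s = 0
    · subst hs
      have : ‖a‖ = 1 := by
        have h := norm_nonneg a
        nlinarith
      simp [this]
    · have e1 := cov_int hb2 (fun y => ‖y‖ ^ (2 * (b - d))) a hs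
      have e2 := cov_int hb2 (fun y => (1 : ℝ)) a hs
      rw [e1]
      rw [show (1 : ℝ) = ∫ y : Eu d, (1 : ℝ) ∂(cauchyMeasure d b) by simp, e2]
      congr 1
      simp_rw [mul_left_comm _ (|s| ^ (2 * b - (d : ℝ))) _]
      rw [integral_const_mul, integral_const_mul, inv_cov hd a has hs]
      simp


lemma amgm3 {p κ' x g : ℝ} (hp2 : p ≤ 2) (hκ : 0 < κ') (hp : 1 / κ' ≤ p - 1) (hx : 0 ≤ x)
    (hg : 0 < g) :
    g ^ (2 - p) * x ^ 2 ≤ (2 - p) * g + 1 / κ' * x ^ (2 * κ') + (p - 1 - 1 / κ') := by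
  have h := Real.geom_mean_le_arith_mean3_weighted (w₁ := 2 - p) (w₂ := 1 / κ')
    (w₃ := p - 1 - 1 / κ') (p₁ := g) (p₂ := x ^ (2 * κ')) (p₃ := 1) (by linarith)
    (by positivity) (by linarith) hg.le (by positivity) (by norm_num) (by ring)
  rw [Real.one_rpow, mul_one, mul_one, ← Real.rpow_mul hx,
    show 2 * κ' * (1 / κ') = 2 by field_simp, Real.rpow_two] at h
  exact h

lemma key_ineq {d : ℕ} (hd : 1 ≤ d) {b p : ℝ} (hb : (d : ℝ) + 1 ≤ b)
    (hp1 : 1 / (b - d) ≤ p - 1) (hp2 : p ≤ 2) (G : Eu d → ℝ) (v : Eu d → Eu d)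
    (hG : ∀ y, 0 < G y) (hGi : Integrable G (cauchyMeasure d b))
    (hvi : Integrable v (cauchyMeasure d b))
    (hyv : Integrable (fun y => inner ℝ y (v y)) (cauchyMeasure d b))
    (hq : Integrable (fun y => G y ^ (p - 2) * ‖v y‖ ^ 2) (cauchyMeasure d b)) :
    ‖∫ y, v y ∂(cauchyMeasure d b)‖ ^ 2 + (∫ y, inner ℝ y (v y) ∂(cauchyMeasure d b)) ^ 2 ≤
      (∫ y, G y ∂(cauchyMeasure d b)) ^ (2 - p) *
        ∫ y, G y ^ (p - 2) * ‖v y‖ ^ 2 ∂(cauchyMeasure d b) := by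
  have hd' : (1 : ℝ) ≤ d := by exact_mod_cast hd
  have hb2 : (d : ℝ) < 2 * b := by linarith
  have hprob := isProb hb2
  set μ := cauchyMeasure d b with hμ
  set M := ∫ y, G y ∂μ with hM
  set A := ∫ y, v y ∂μ with hA
  set B := ∫ y, inner ℝ y (v y) ∂μ with hB
  set T := ∫ y, G y ^ (p - 2) * ‖v y‖ ^ 2 ∂μ with hT
  have hT0 : 0 ≤ T := integral_nonneg fun y => by have := hG y; positivity
  have hMpos : 0 < M := by
    rw [hM, integral_pos_iff_support_of_nonneg (fun y => (hG y).le) hGi]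
    have : Function.support G = Set.univ := by
      ext y; simpa using (hG y).ne'
    rw [this]; simp
  by_cases hN0 : ‖A‖ ^ 2 + B ^ 2 = 0
  · rw [hN0]; positivity
  have hNpos : 0 < ‖A‖ ^ 2 + B ^ 2 := lt_of_le_of_ne (by positivity) (Ne.symm hN0)
  set N := √(‖A‖ ^ 2 + B ^ 2) with hN
  have hNN : N ^ 2 = ‖A‖ ^ 2 + B ^ 2 := Real.sq_sqrt hNpos.le
  have hNp : 0 < N := Real.sqrt_pos.2 hNpos
  have has : ‖(1 / N) • A‖ ^ 2 + (B / N) ^ 2 = 1 := by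
    rw [norm_smul, mul_pow, Real.norm_eq_abs, sq_abs]
    field_simp
    linarith
  obtain ⟨hmi, hm1⟩ := moment hd hb ((1 / N) • A) has
  set a := (1 / N) • A with ha
  set s := B / N with hs
  have hpt : ∀ y, 2 * (inner ℝ a (v y) + s * inner ℝ y (v y)) ≤
      M ^ (2 - p) / N * (G y ^ (p - 2) * ‖v y‖ ^ 2) +
      N * ((2 - p) * (G y / M) + 1 / (b - d) * ‖a + s • y‖ ^ (2 * (b - d)) +
        (p - 1 - 1 / (b - d))) := by
    intro y
    have h1 := amgm3 (p := p) (κ' := b - d) (x := ‖a + s • y‖) (g := G y / M) hp2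
      (by linarith) hp1 (norm_nonneg _) (div_pos (hG y) hMpos)
    have h2 : inner ℝ a (v y) + s * inner ℝ y (v y) = inner ℝ (a + s • y) (v y) := by
      rw [inner_add_left, real_inner_smul_left y (v y) s]
    rw [h2]
    have h3 := real_inner_le_norm (a + s • y) (v y)
    have hGy := hG y
    set r := (G y / M) ^ (2 - p) with hr
    have hrpos : 0 < r := by positivity
    have h4 : M ^ (2 - p) / N * (G y ^ (p - 2) * ‖v y‖ ^ 2) = 1 / (r * N) * ‖v y‖ ^ 2 := by
      rw [hr, Real.div_rpow hGy.le hMpos.le, show p - 2 = -(2 - p) by ring,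
        Real.rpow_neg hGy.le]
      have : 0 < G y ^ (2 - p) := by positivity
      have : 0 < M ^ (2 - p) := by positivity
      field_simp
    rw [h4]
    have h5 : 2 * (‖a + s • y‖ * ‖v y‖) ≤ 1 / (r * N) * ‖v y‖ ^ 2 + N * (r * ‖a + s • y‖ ^ 2) := by
      have h6 : 1 / (r * N) * ‖v y‖ ^ 2 + N * (r * ‖a + s • y‖ ^ 2) -
        2 * (‖a + s • y‖ * ‖v y‖) = 1 / (r * N) * (‖v y‖ - r * N * ‖a + s • y‖) ^ 2 := by
        field_simp
        ring
      have h7 : 0 ≤ 1 / (r * N) * (‖v y‖ - r * N * ‖a + s • y‖) ^ 2 := by positivity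
      linarith
    have h8 := mul_le_mul_of_nonneg_left h1 hNp.le
    linarith
  have iA : Integrable (fun y => inner ℝ a (v y)) μ := hvi.const_inner a
  have i1 : Integrable (fun y => (2 - p) * (G y / M)) μ := (hGi.div_const M).const_mul _
  have i2 : Integrable (fun y => 1 / (b - d) * ‖a + s • y‖ ^ (2 * (b - d))) μ := hmi.const_mul _
  have i12 : Integrable (fun y => (2 - p) * (G y / M) +
      1 / (b - d) * ‖a + s • y‖ ^ (2 * (b - d))) μ := i1.add i2
  have i3 : Integrable (fun _ : Eu d => p - 1 - 1 / (b - d)) μ := integrable_const _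
  have i123 : Integrable (fun y => (2 - p) * (G y / M) +
      1 / (b - d) * ‖a + s • y‖ ^ (2 * (b - d)) + (p - 1 - 1 / (b - d))) μ := i12.add i3
  have hint := integral_mono ((iA.add (hyv.const_mul s)).const_mul 2)
    ((hq.const_mul (M ^ (2 - p) / N)).add (i123.const_mul N)) hpt
  simp only [Pi.add_apply] at hint
  rw [integral_const_mul, integral_add iA (hyv.const_mul s), integral_const_mul,
    integral_inner hvi, integral_add (hq.const_mul _) (i123.const_mul N), integral_const_mul,
    integral_const_mul, integral_add i12 i3,
    integral_add i1 i2, integral_const_mul, integral_const_mul, integral_div, hm1] at hint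
  rw [← hA, ← hB, ← hT, ← hM] at hint
  have e1 : inner ℝ a A + s * B = N := by
    rw [ha, hs, inner_smul_left, real_inner_self_eq_norm_sq]
    simp
    field_simp
    linarith
  rw [e1, div_self hMpos.ne'] at hint
  simp only [integral_const, probReal_univ, smul_eq_mul] at hint
  have e2 : N ≤ M ^ (2 - p) / N * T := by linarith
  have e3 : N * N ≤ N * (M ^ (2 - p) / N * T) := mul_le_mul_of_nonneg_left e2 hNp.le
  have e4 : N * (M ^ (2 - p) / N * T) = M ^ (2 - p) * T := by field_simp
  rw [← hNN, sq]
  linarith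


lemma hasDerivAt_param {d : ℕ} {φ : Eu d → ℝ} (hφ : Continuous φ) (hc : HasCompactSupport φ)
    {K K' : ℝ → Eu d → ℝ} {O : Set ℝ} (hO : IsOpen O) {t₀ : ℝ} (ht₀ : t₀ ∈ O)
    (hK : ∀ t ∈ O, Continuous (K t))
    (hK' : ContinuousOn (fun x : ℝ × Eu d => K' x.1 x.2) (O ×ˢ Set.univ))
    (hder : ∀ t ∈ O, ∀ y, HasDerivAt (fun t => K t y) (K' t y) t) :
    HasDerivAt (fun t => ∫ y, φ y * K t y) (∫ y, φ y * K' t₀ y) t₀ := by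
  obtain ⟨δ, hδ, hδO⟩ := Metric.nhds_basis_closedBall.mem_iff.1 (hO.mem_nhds ht₀)
  have hcomp : IsCompact (Metric.closedBall t₀ δ ×ˢ tsupport φ) :=
    (isCompact_closedBall t₀ δ).prod hc
  obtain ⟨C, hC⟩ := hcomp.exists_bound_of_continuousOn
    (hK'.mono (Set.prod_mono hδO (Set.subset_univ _)))
  have hK'c : Continuous (K' t₀) := by
    have : ContinuousOn (K' t₀) Set.univ :=
      hK'.comp (f := fun y => (t₀, y)) (by fun_prop) (fun y _ => ⟨ht₀, Set.mem_univ _⟩)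
    exact continuousOn_univ.1 this
  refine (hasDerivAt_integral_of_dominated_loc_of_deriv_le (bound := fun y => |C| * ‖φ y‖)
    (F := fun t y => φ y * K t y) (F' := fun t y => φ y * K' t y)
    (Metric.closedBall_mem_nhds t₀ hδ) ?_ ?_ ?_ ?_ ?_ ?_).2
  · filter_upwards [hO.mem_nhds ht₀] with t ht
    exact (hφ.mul (hK t ht)).aestronglyMeasurable
  · exact (hφ.mul (hK t₀ ht₀)).integrable_of_hasCompactSupport hc.mul_right
  · exact (hφ.mul hK'c).aestronglyMeasurable
  · refine Filter.Eventually.of_forall fun y t ht => ?_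
    rw [norm_mul, mul_comm]
    by_cases hy : y ∈ tsupport φ
    · have := hC (t, y) ⟨ht, hy⟩
      have h2 := le_abs_self C
      gcongr
      exact this.trans h2
    · rw [image_eq_zero_of_notMem_tsupport hy]; simp
  · exact (hφ.norm.integrable_of_hasCompactSupport hc.norm).const_mul _
  · refine Filter.Eventually.of_forall fun y t ht => ?_
    exact (hder t (hδO ht) y).const_mul (φ y)

section kernel
variable {d : ℕ}

noncomputable def kW (w θ t : ℝ) : ℝ := w + t * θ
noncomputable def kS (z e : Eu d) (w θ t : ℝ) (y : Eu d) : ℝ :=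
  (kW w θ t) ^ 2 + ‖y - (z + t • e)‖ ^ 2
noncomputable def kS1 (z e : Eu d) (w θ t : ℝ) (y : Eu d) : ℝ :=
  2 * kW w θ t * θ - 2 * inner ℝ (y - (z + t • e)) e
noncomputable def K0 (α β : ℝ) (z e : Eu d) (w θ t : ℝ) (y : Eu d) : ℝ :=
  (kW w θ t) ^ α * (kS z e w θ t y) ^ (-β)
noncomputable def K1 (α β : ℝ) (z e : Eu d) (w θ t : ℝ) (y : Eu d) : ℝ :=
  α * θ * (kW w θ t) ^ (α - 1) * (kS z e w θ t y) ^ (-β)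
   - β * (kW w θ t) ^ α * kS1 z e w θ t y * (kS z e w θ t y) ^ (-β - 1)
noncomputable def K2 (α β : ℝ) (z e : Eu d) (w θ t : ℝ) (y : Eu d) : ℝ :=
  α * (α - 1) * θ ^ 2 * (kW w θ t) ^ (α - 1 - 1) * (kS z e w θ t y) ^ (-β)
   - 2 * α * β * θ * (kW w θ t) ^ (α - 1) * kS1 z e w θ t y * (kS z e w θ t y) ^ (-β - 1)
   - 2 * β * (θ ^ 2 + ‖e‖ ^ 2) * (kW w θ t) ^ α * (kS z e w θ t y) ^ (-β - 1)
   + β * (β + 1) * (kW w θ t) ^ α * kS1 z e w θ t y ^ 2 * (kS z e w θ t y) ^ (-β - 1 - 1)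

variable (z e : Eu d) (w θ : ℝ)

lemma kW_deriv (t : ℝ) : HasDerivAt (kW w θ) θ t := by
  unfold kW
  simpa using ((hasDerivAt_id t).mul_const θ).const_add w

lemma path_deriv (t : ℝ) (y : Eu d) : HasDerivAt (fun t : ℝ => y - (z + t • e)) (-e) t := by
  have h := (((hasDerivAt_id t).smul_const e).const_add z).const_sub y
  simpa using h

lemma kS_deriv (t : ℝ) (y : Eu d) :
    HasDerivAt (fun t => kS z e w θ t y) (kS1 z e w θ t y) t := by
  unfold kS kS1
  have h := ((kW_deriv w θ t).pow 2).add (path_deriv z e t y).norm_sq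
  refine h.congr_deriv ?_
  rw [inner_neg_right]; simp; ring

lemma kS1_deriv (t : ℝ) (y : Eu d) :
    HasDerivAt (fun t => kS1 z e w θ t y) (2 * (θ ^ 2 + ‖e‖ ^ 2)) t := by
  unfold kS1
  have h := (((kW_deriv w θ t).const_mul 2).mul_const θ).sub
    (((path_deriv z e t y).inner ℝ (hasDerivAt_const t e)).const_mul 2)
  refine h.congr_deriv ?_
  rw [inner_neg_left, inner_zero_right, real_inner_self_eq_norm_sq]; ring

lemma kS_pos {t : ℝ} (ht : 0 < kW w θ t) (y : Eu d) : 0 < kS z e w θ t y := by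
  unfold kS; positivity

lemma K0_deriv (α β : ℝ) {t : ℝ} (ht : 0 < kW w θ t) (y : Eu d) :
    HasDerivAt (fun t => K0 α β z e w θ t y) (K1 α β z e w θ t y) t := by
  have hS := kS_pos z e w θ ht y
  unfold K0 K1
  have h := ((kW_deriv w θ t).rpow_const (p := α) (Or.inl ht.ne')).mul
    ((kS_deriv z e w θ t y).rpow_const (p := -β) (Or.inl hS.ne'))
  refine h.congr_deriv ?_
  ring

lemma K1_deriv (α β : ℝ) {t : ℝ} (ht : 0 < kW w θ t) (y : Eu d) :
    HasDerivAt (fun t => K1 α β z e w θ t y) (K2 α β z e w θ t y) t := by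
  have hS := kS_pos z e w θ ht y
  unfold K1 K2
  have h := ((((kW_deriv w θ t).rpow_const (p := α - 1) (Or.inl ht.ne')).const_mul (α * θ)).mul
    ((kS_deriv z e w θ t y).rpow_const (p := -β) (Or.inl hS.ne'))).sub
    (((((kW_deriv w θ t).rpow_const (p := α) (Or.inl ht.ne')).const_mul β).mul
      (kS1_deriv z e w θ t y)).mul
    ((kS_deriv z e w θ t y).rpow_const (p := -β - 1) (Or.inl hS.ne')))
  refine h.congr_deriv ?_
  simp only [Pi.mul_apply]
  ring

lemma kW_cont : Continuous (fun x : ℝ × Eu d => kW w θ x.1) := by unfold kW; fun_prop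
lemma kS_cont : Continuous (fun x : ℝ × Eu d => kS z e w θ x.1 x.2) := by
  unfold kS kW; fun_prop
lemma kS1_cont : Continuous (fun x : ℝ × Eu d => kS1 z e w θ x.1 x.2) := by
  unfold kS1 kW; fun_prop

lemma kWr_cont (α : ℝ) : ContinuousOn (fun x : ℝ × Eu d => kW w θ x.1 ^ α)
    ({t | 0 < kW w θ t} ×ˢ Set.univ) :=
  (kW_cont w θ).continuousOn.rpow_const fun _ hx => Or.inl (ne_of_gt hx.1)
lemma kSr_cont (α : ℝ) : ContinuousOn (fun x : ℝ × Eu d => kS z e w θ x.1 x.2 ^ α)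
    ({t | 0 < kW w θ t} ×ˢ Set.univ) :=
  (kS_cont z e w θ).continuousOn.rpow_const fun _ hx =>
    Or.inl (ne_of_gt (kS_pos z e w θ hx.1 _))

lemma K0_cont (α β : ℝ) : ContinuousOn (fun x : ℝ × Eu d => K0 α β z e w θ x.1 x.2)
    ({t | 0 < kW w θ t} ×ˢ Set.univ) :=
  (kWr_cont w θ α).mul (kSr_cont z e w θ _)

lemma K1_cont (α β : ℝ) : ContinuousOn (fun x : ℝ × Eu d => K1 α β z e w θ x.1 x.2)
    ({t | 0 < kW w θ t} ×ˢ Set.univ) := by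
  unfold K1
  exact ((continuousOn_const.mul (kWr_cont w θ _)).mul (kSr_cont z e w θ _)).sub
    (((continuousOn_const.mul (kWr_cont w θ _)).mul (kS1_cont z e w θ).continuousOn).mul
      (kSr_cont z e w θ _))

lemma K2_cont (α β : ℝ) : ContinuousOn (fun x : ℝ × Eu d => K2 α β z e w θ x.1 x.2)
    ({t | 0 < kW w θ t} ×ˢ Set.univ) := by
  unfold K2
  exact ((((continuousOn_const.mul (kWr_cont w θ _)).mul (kSr_cont z e w θ _)).sub
    (((continuousOn_const.mul (kWr_cont w θ _)).mul (kS1_cont z e w θ).continuousOn).mul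
      (kSr_cont z e w θ _))).sub
    ((continuousOn_const.mul (kWr_cont w θ _)).mul (kSr_cont z e w θ _))).add
    (((continuousOn_const.mul (kWr_cont w θ _)).mul ((kS1_cont z e w θ).pow 2).continuousOn).mul
      (kSr_cont z e w θ _))

lemma slice_cont {F : ℝ → Eu d → ℝ} {O : Set ℝ}
    (h : ContinuousOn (fun x : ℝ × Eu d => F x.1 x.2) (O ×ˢ Set.univ)) {t : ℝ} (ht : t ∈ O) :
    Continuous (F t) := by
  have : ContinuousOn (F t) Set.univ :=
    h.comp (f := fun y => (t, y)) (by fun_prop) (fun y _ => ⟨ht, Set.mem_univ _⟩)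
  exact continuousOn_univ.1 this

lemma O_open : IsOpen {t | 0 < kW w θ t} := by
  refine isOpen_lt continuous_const ?_
  unfold kW; fun_prop

lemma intK0_deriv (α β : ℝ) {φ : Eu d → ℝ} (hφ : Continuous φ) (hc : HasCompactSupport φ)
    {t : ℝ} (ht : 0 < kW w θ t) :
    HasDerivAt (fun t => ∫ y, φ y * K0 α β z e w θ t y) (∫ y, φ y * K1 α β z e w θ t y) t :=
  hasDerivAt_param hφ hc (O_open w θ) ht (fun _ hs => slice_cont (K0_cont z e w θ α β) hs)
    (K1_cont z e w θ α β) (fun _ hs y => K0_deriv z e w θ α β hs y)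

lemma intK1_deriv (α β : ℝ) {φ : Eu d → ℝ} (hφ : Continuous φ) (hc : HasCompactSupport φ)
    {t : ℝ} (ht : 0 < kW w θ t) :
    HasDerivAt (fun t => ∫ y, φ y * K1 α β z e w θ t y) (∫ y, φ y * K2 α β z e w θ t y) t :=
  hasDerivAt_param hφ hc (O_open w θ) ht (fun _ hs => slice_cont (K1_cont z e w θ α β) hs)
    (K2_cont z e w θ α β) (fun _ hs y => K1_deriv z e w θ α β hs y)

/-- The operator applied to the kernel. -/
lemma kernel_pde (α β : ℝ) (hw : 0 < w) (y : Eu d) :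
    (∑ i, K2 α β z (EuclideanSpace.single i (1 : ℝ)) w 0 0 y) + K2 α β z 0 w 1 0 y +
      (1 - α) / w * K1 α β z 0 w 1 0 y =
    2 * β * (2 * β - α - d) * (w ^ α * (w ^ 2 + ‖y - z‖ ^ 2) ^ (-β - 1)) := by
  have hS : 0 < w ^ 2 + ‖y - z‖ ^ 2 := by positivity
  have hsum : ∑ i, (y - z) i ^ 2 = ‖y - z‖ ^ 2 := by
    rw [EuclideanSpace.norm_sq_eq]; simp
  simp only [K1, K2, kS, kS1, kW, EuclideanSpace.inner_single_right, smul_zero, zero_smul, add_zero,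
    zero_mul, mul_zero, inner_zero_right, mul_one, one_mul, PiLp.norm_single, norm_one, sub_zero,
    norm_zero, one_pow, zero_sub]
  have e1 : ∀ i : Fin d, ((-(2 * (starRingEnd ℝ) ((y - z) i))) ^ 2) = 4 * (y - z) i ^ 2 := by
    intro i; simp; ring
  simp only [e1]
  rw [Real.rpow_sub_one hS.ne' (-β - 1), Real.rpow_sub_one hw.ne' (α - 1),
    Real.rpow_sub_one hw.ne' α]
  set X := (w ^ 2 + ‖y - z‖ ^ 2) ^ (-β - 1) with hX
  have e2 : (w ^ 2 + ‖y - z‖ ^ 2) ^ (-β) = X * (w ^ 2 + ‖y - z‖ ^ 2) := by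
    rw [hX, Real.rpow_sub_one hS.ne']; field_simp
  rw [e2]
  simp only [ne_eq, OfNat.ofNat_ne_zero, not_false_eq_true, zero_pow, mul_zero, zero_mul,
    zero_add, Finset.sum_add_distrib, Finset.sum_const,
    Finset.card_univ, Fintype.card_fin, nsmul_eq_mul, zero_sub]
  rw [← Finset.sum_mul, ← Finset.mul_sum, ← Finset.mul_sum, hsum]
  field_simp
  ring

end kernel

/-- Second-order necessary condition. -/
lemma second_deriv_nonneg {D D' : ℝ → ℝ} {D2 : ℝ} (hmin : IsLocalMin D 0)
    (h1 : ∀ᶠ t in nhds (0 : ℝ), HasDerivAt D (D' t) t) (h2 : HasDerivAt D' D2 0) :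
    D' 0 = 0 ∧ 0 ≤ D2 := by
  have h0 : D' 0 = 0 := hmin.hasDerivAt_eq_zero h1.self_of_nhds
  refine ⟨h0, ?_⟩
  by_contra hneg
  push Not at hneg
  have hd : deriv D =ᶠ[nhds 0] D' := h1.mono fun t ht => ht.deriv
  have hdd : deriv (deriv D) 0 = D2 := by rw [hd.deriv_eq]; exact h2.deriv
  have hmax : IsLocalMax D 0 := isLocalMax_of_deriv_deriv_neg (by rw [hdd]; exact hneg)
    (by rw [hd.self_of_nhds, h0]) h1.self_of_nhds.continuousAt
  have hconst : D =ᶠ[nhds 0] fun _ => D 0 := by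
    filter_upwards [hmin, hmax] with t ha hb'
    exact le_antisymm hb' ha
  have e1 : deriv D =ᶠ[nhds 0] deriv (fun _ => D 0) := hconst.deriv
  have e2 : deriv (deriv D) 0 = 0 := by
    rw [e1.deriv_eq]; simp
  linarith


section avg
variable {d : ℕ} {b : ℝ}

lemma integrable_one_add_sq (hd : 1 ≤ d) (hb : (d : ℝ) + 1 ≤ b) :
    Integrable (fun y : Eu d => 1 + ‖y‖ ^ 2) (cauchyMeasure d b) := by
  have hd' : (1 : ℝ) ≤ d := by exact_mod_cast hd
  rw [integrable_cauchy (by linarith)]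
  refine (integrable_J (d := d) (b := b - 1) (by linarith)).congr
    (Filter.Eventually.of_forall fun y => ?_)
  simp only
  rw [show -(b - 1) = 1 + -b by ring, Real.rpow_add (one_add_pos' y), Real.rpow_one]

lemma integrable_norm_cauchy (hd : 1 ≤ d) (hb : (d : ℝ) + 1 ≤ b) :
    Integrable (fun y : Eu d => ‖y‖) (cauchyMeasure d b) := by
  refine (integrable_one_add_sq hd hb).mono' (by fun_prop) ?_
  refine Filter.Eventually.of_forall fun y => ?_
  rw [norm_norm]
  nlinarith [sq_nonneg (‖y‖ - 1), norm_nonneg y]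

lemma cont_avg {h m : Eu d → ℝ} (hh : Continuous h) {C : ℝ} (hC : ∀ x, |h x| ≤ C)
    (hm : Integrable m (cauchyMeasure d b)) :
    Continuous (fun x : Eu d × ℝ => ∫ y, h (x.1 + x.2 • y) * m y ∂(cauchyMeasure d b)) := by
  refine continuous_of_dominated (bound := fun y => C * |m y|) ?_ ?_ ?_ ?_
  · intro x
    exact (Continuous.aestronglyMeasurable (by fun_prop)).mul hm.aestronglyMeasurable
  · intro x
    refine Filter.Eventually.of_forall fun y => ?_
    rw [norm_mul, Real.norm_eq_abs, Real.norm_eq_abs]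
    gcongr
    exact hC _
  · exact hm.abs.const_mul C
  · refine Filter.Eventually.of_forall fun y => ?_
    fun_prop

lemma decay (hd : 1 ≤ d) (hb : (d : ℝ) + 1 ≤ b) {φ : Eu d → ℝ} (hφ : Continuous φ)
    (hc : HasCompactSupport φ) :
    Filter.Tendsto (fun x : Eu d × ℝ => ∫ y, φ (x.1 + x.2 • y) ∂(cauchyMeasure d b))
      (Filter.cocompact _) (nhds 0) := by
  have hd' : (1 : ℝ) ≤ d := by exact_mod_cast hd
  have hb2 : (d : ℝ) < 2 * b := by linarith
  have hprob := isProb hb2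
  have hZ := cZ_pos hb2
  obtain ⟨R, hRpos, hR⟩ := hc.isCompact.isBounded.exists_pos_norm_le
  have hφi : Integrable φ := hφ.integrable_of_hasCompactSupport hc
  set I := ∫ y, |φ y| with hI
  have hlim : Filter.Tendsto (fun x : Eu d × ℝ => (cZ d b)⁻¹ * (I * (‖x‖ / 2) ^ (-(d : ℝ))))
      (Filter.cocompact _) (nhds 0) := by
    have h1 : Filter.Tendsto (fun x : Eu d × ℝ => (‖x‖ / 2)) (Filter.cocompact _) Filter.atTop :=
      (tendsto_norm_cocompact_atTop).atTop_div_const (by norm_num)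
    have h2 := (tendsto_rpow_neg_atTop (y := (d : ℝ)) (by linarith)).comp h1
    have h3 := (h2.const_mul I).const_mul (cZ d b)⁻¹
    simpa using h3
  refine squeeze_zero_norm' ?_ hlim
  filter_upwards [tendsto_norm_cocompact_atTop.eventually (Filter.eventually_ge_atTop (2 * R))]
    with x hx
  obtain ⟨z, w⟩ := x
  simp only at hx ⊢
  set m := ‖(z, w)‖ with hm
  have hmpos : 0 < m := by linarith
  have hI0 : 0 ≤ I := integral_nonneg fun y => abs_nonneg _
  have hmm : m = max ‖z‖ |w| := by rw [hm, Prod.norm_def]; rfl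
  by_cases hw : w = 0
  · subst hw
    have hz : m = ‖z‖ := by rw [hmm]; simp
    have : φ z = 0 := by
      by_contra hne
      have := hR z (subset_tsupport _ hne)
      linarith
    simp [this]
    positivity
  · rw [cov_int hb2 φ z hw, norm_mul, Real.norm_eq_abs, abs_of_pos (inv_pos.2 hZ)]
    gcongr
    rw [hI, ← integral_mul_const]
    refine norm_integral_le_of_norm_le (hφi.abs.mul_const _) (Filter.Eventually.of_forall fun y => ?_)
    have hw' : 0 < |w| := abs_pos.2 hw
    have hSpos : 0 < w ^ 2 + ‖y - z‖ ^ 2 := by positivity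
    rw [norm_mul, Real.norm_eq_abs, Real.norm_eq_abs, abs_of_nonneg (by positivity : 0 ≤
      |w| ^ (2 * b - (d : ℝ)) * (w ^ 2 + ‖y - z‖ ^ 2) ^ (-b))]
    by_cases hy : y ∈ tsupport φ
    · refine mul_le_mul_of_nonneg_left ?_ (abs_nonneg _)
      have hyR := hR y hy
      have hS : (m / 2) ^ 2 ≤ w ^ 2 + ‖y - z‖ ^ 2 := by
        rcases max_choice ‖z‖ |w| with h | h
        · rw [h] at hmm
          have h1 : ‖z‖ - ‖y‖ ≤ ‖y - z‖ := by
            rw [norm_sub_rev]; exact norm_sub_norm_le z y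
          have h2 : m / 2 ≤ ‖y - z‖ := by linarith
          have : (m / 2) ^ 2 ≤ ‖y - z‖ ^ 2 := by gcongr
          nlinarith [sq_nonneg w]
        · rw [h] at hmm
          have : w ^ 2 = m ^ 2 := by rw [hmm, sq_abs]
          nlinarith [sq_nonneg ‖y - z‖, sq_nonneg m]
      set S := w ^ 2 + ‖y - z‖ ^ 2 with hSdef
      have hwS : |w| ≤ √S := by
        rw [← Real.sqrt_sq_eq_abs]
        apply Real.sqrt_le_sqrt
        nlinarith [sq_nonneg ‖y - z‖]
      have hmS : m / 2 ≤ √S := Real.le_sqrt_of_sq_le hS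
      have hsS : 0 < √S := Real.sqrt_pos.2 hSpos
      calc |w| ^ (2 * b - (d : ℝ)) * S ^ (-b) ≤ (√S) ^ (2 * b - (d : ℝ)) * S ^ (-b) := by
            gcongr
        _ = (√S) ^ (-(d : ℝ)) := by
            have : S = (√S) ^ (2 : ℝ) := by rw [Real.rpow_two, Real.sq_sqrt hSpos.le]
            nth_rewrite 2 [this]
            rw [← Real.rpow_mul hsS.le, ← Real.rpow_add hsS]
            congr 1; ring
        _ ≤ (m / 2) ^ (-(d : ℝ)) :=
            Real.rpow_le_rpow_of_nonpos (by positivity) hmS (by linarith)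
    · rw [image_eq_zero_of_notMem_tsupport hy]
      simp

lemma intPDE (α β : ℝ) (z : Eu d) {w : ℝ} (hw : 0 < w) {φ : Eu d → ℝ} (hφ : Continuous φ)
    (hc : HasCompactSupport φ) :
    (∑ i, ∫ y, φ y * K2 α β z (EuclideanSpace.single i (1 : ℝ)) w 0 0 y) +
      (∫ y, φ y * K2 α β z 0 w 1 0 y) +
      (1 - α) / w * (∫ y, φ y * K1 α β z 0 w 1 0 y) =
    2 * β * (2 * β - α - d) * ∫ y, φ y * (w ^ α * (w ^ 2 + ‖y - z‖ ^ 2) ^ (-β - 1)) := by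
  have ht : ∀ θ : ℝ, (0 : ℝ) ∈ {t | 0 < kW w θ t} := fun θ => by
    simp [kW, hw]
  have i2 : ∀ (e : Eu d) (θ : ℝ), Integrable (fun y => φ y * K2 α β z e w θ 0 y) := fun e θ =>
    (hφ.mul (slice_cont (K2_cont z e w θ α β) (ht θ))).integrable_of_hasCompactSupport hc.mul_right
  have i1 : ∀ (e : Eu d) (θ : ℝ), Integrable (fun y => φ y * K1 α β z e w θ 0 y) := fun e θ =>
    (hφ.mul (slice_cont (K1_cont z e w θ α β) (ht θ))).integrable_of_hasCompactSupport hc.mul_right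
  have i3 : Integrable (fun y => (∑ i, φ y * K2 α β z (EuclideanSpace.single i (1 : ℝ)) w 0 0 y) +
      φ y * K2 α β z 0 w 1 0 y) := (integrable_finsetSum _ (fun i _ => i2 _ _)).add (i2 _ _)
  rw [← integral_finsetSum _ (fun i _ => i2 _ _), ← integral_add
    (integrable_finsetSum _ (fun i _ => i2 _ _)) (i2 _ _), ← integral_const_mul,
    ← integral_add i3 ((i1 _ _).const_mul _), ← integral_const_mul]
  congr 1
  ext y
  have := kernel_pde z w α β hw y
  rw [← Finset.mul_sum]
  linear_combination φ y * this
end avg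


section core
variable {d : ℕ} {b : ℝ}

/-- Directional derivative of the average. -/
lemma avg_deriv (hd : 1 ≤ d) (hb : (d : ℝ) + 1 ≤ b) {g : Eu d → ℝ} (hg : ContDiff ℝ 1 g)
    {C L : ℝ} (hC : ∀ x, |g x| ≤ C) (hL : ∀ x, ‖gradient g x‖ ≤ L) (z e : Eu d) (w θ : ℝ) :
    HasDerivAt (fun t : ℝ => ∫ y, g ((z + t • e) + (kW w θ t) • y) ∂(cauchyMeasure d b))
      (∫ y, inner ℝ (gradient g (z + w • y)) (e + θ • y) ∂(cauchyMeasure d b)) 0 := by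
  have hd' : (1 : ℝ) ≤ d := by exact_mod_cast hd
  have hprob := isProb (d := d) (b := b) (by linarith)
  have hgc : Continuous g := hg.continuous
  have hgrad : ∀ x, HasGradientAt g (gradient g x) x := fun x =>
    (hg.differentiable (by norm_num) x).hasGradientAt
  have hgradc : Continuous (gradient g) := by
    unfold gradient
    exact (LinearIsometryEquiv.continuous _).comp (hg.continuous_fderiv (by norm_num))
  have hL0 : 0 ≤ L := (norm_nonneg _).trans (hL 0)
  have hline : ∀ (t : ℝ) (y : Eu d), HasDerivAt (fun t : ℝ => (z + t • e) + (kW w θ t) • y)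
      (e + θ • y) t := by
    intro t y
    have h := (((hasDerivAt_id t).smul_const e).const_add z).add
      ((kW_deriv w θ t).smul_const y)
    exact HasDerivAt.congr_deriv h (by simp)
  have key := (hasDerivAt_integral_of_dominated_loc_of_deriv_le (μ := cauchyMeasure d b)
    (bound := fun y => L * (‖e‖ + |θ| * ‖y‖)) (x₀ := (0 : ℝ)) (s := Set.univ)
    (F := fun t y => g ((z + t • e) + (kW w θ t) • y))
    (F' := fun t y => inner ℝ (gradient g ((z + t • e) + (kW w θ t) • y)) (e + θ • y))
    Filter.univ_mem ?_ ?_ ?_ ?_ ?_ ?_).2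
  · simpa [kW] using key
  · exact Filter.Eventually.of_forall fun t => Continuous.aestronglyMeasurable (by fun_prop)
  · refine (integrable_const C).mono' (Continuous.aestronglyMeasurable (by fun_prop))
      (Filter.Eventually.of_forall fun y => hC _)
  · exact Continuous.aestronglyMeasurable (by fun_prop)
  · refine Filter.Eventually.of_forall fun y t _ => ?_
    refine (norm_inner_le_norm _ _).trans ?_
    have h1 : ‖e + θ • y‖ ≤ ‖e‖ + |θ| * ‖y‖ := by
      refine (norm_add_le _ _).trans ?_
      rw [norm_smul, Real.norm_eq_abs]
    gcongr
    exact hL _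
  · exact ((integrable_const _).add ((integrable_norm_cauchy hd hb).const_mul _)).const_mul _
  · refine Filter.Eventually.of_forall fun y t _ => ?_
    have h := (hgrad ((z + t • e) + (kW w θ t) • y)).hasFDerivAt.comp_hasDerivAt t (hline t y)
    exact HasDerivAt.congr_deriv h (by simp [InnerProductSpace.toDual_apply_apply])

/-- kernel form -/
lemma avg_kernel (hd : 1 ≤ d) (hb : (d : ℝ) + 1 ≤ b) {h : Eu d → ℝ} (hh : Continuous h)
    (c : ℝ) (hc : HasCompactSupport (fun x => h x - c)) (z e : Eu d) {w θ t : ℝ}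
    (ht : 0 < kW w θ t) :
    ∫ y, h ((z + t • e) + (kW w θ t) • y) ∂(cauchyMeasure d b) =
      c + (cZ d b)⁻¹ * ∫ y, (h y - c) * K0 (2 * b - d) b z e w θ t y := by
  have hd' : (1 : ℝ) ≤ d := by exact_mod_cast hd
  have hb2 : (d : ℝ) < 2 * b := by linarith
  have hprob := isProb hb2
  have e1 := cov_int hb2 (fun x => h x - c) (z + t • e) ht.ne'
  obtain ⟨C, hC⟩ := (hh.sub continuous_const).bounded_above_of_compact_support hc
  have hi : Integrable (fun y => h ((z + t • e) + (kW w θ t) • y) - c) (cauchyMeasure d b) :=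
    (integrable_const C).mono' (Continuous.aestronglyMeasurable (by fun_prop))
      (Filter.Eventually.of_forall fun y => hC _)
  have e2 : ∫ y, h ((z + t • e) + (kW w θ t) • y) ∂(cauchyMeasure d b) =
      ∫ y, ((h ((z + t • e) + (kW w θ t) • y) - c) + c) ∂(cauchyMeasure d b) := by simp
  rw [e2, integral_add hi (integrable_const c), e1]
  simp only [integral_const, probReal_univ, one_smul]
  rw [add_comm, abs_of_pos ht]
  rfl

variable (d b) in
noncomputable def DD (p : ℝ) (g : Eu d → ℝ) (x : Eu d × ℝ) : ℝ :=
  p * (p - 1) / (4 * (b - 1)) * (x.2 ^ 2 *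
    ∫ y, (g (x.1 + x.2 • y) ^ (p - 2) * ‖gradient g (x.1 + x.2 • y)‖ ^ 2) * (1 + ‖y‖ ^ 2)
      ∂(cauchyMeasure d b))
  - ∫ y, g (x.1 + x.2 • y) ^ p ∂(cauchyMeasure d b)
  + (∫ y, g (x.1 + x.2 • y) ∂(cauchyMeasure d b)) ^ p

/-- First and second order conditions in direction `(e,θ)` at a minimum. -/
lemma dir_cond (hd : 1 ≤ d) (hb : (d : ℝ) + 1 ≤ b) {p : ℝ} {g : Eu d → ℝ}
    (hg : ContDiff ℝ 1 g) (hgpos : ∀ x, 0 < g x) {c : ℝ}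
    (hc : HasCompactSupport (fun x => g x - c))
    (hcp : HasCompactSupport (fun x => g x ^ p - c ^ p))
    (hqc : Continuous (fun x => g x ^ (p - 2) * ‖gradient g x‖ ^ 2))
    (hq : HasCompactSupport (fun x => g x ^ (p - 2) * ‖gradient g x‖ ^ 2))
    (z e : Eu d) {w θ ε : ℝ} (hw : 0 < w)
    (hmin : ∀ x : Eu d × ℝ, DD d b p g (z, w) + ε * |w| ≤ DD d b p g x + ε * |x.2|)
    (u : ℝ) (hu : u = ∫ y, g (z + w • y) ∂(cauchyMeasure d b)) (hupos : 0 < u) :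
    p * (p - 1) / (4 * (b - 1)) * ((cZ d b)⁻¹ * ∫ y, (g y ^ (p - 2) * ‖gradient g y‖ ^ 2) *
        K1 (2 * b - d) (b - 1) z e w θ 0 y)
      - (cZ d b)⁻¹ * (∫ y, (g y ^ p - c ^ p) * K1 (2 * b - d) b z e w θ 0 y)
      + (cZ d b)⁻¹ * (∫ y, (g y - c) * K1 (2 * b - d) b z e w θ 0 y) * p * u ^ (p - 1)
      + ε * θ = 0 ∧
    0 ≤ p * (p - 1) / (4 * (b - 1)) * ((cZ d b)⁻¹ * ∫ y, (g y ^ (p - 2) * ‖gradient g y‖ ^ 2) *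
        K2 (2 * b - d) (b - 1) z e w θ 0 y)
      - (cZ d b)⁻¹ * (∫ y, (g y ^ p - c ^ p) * K2 (2 * b - d) b z e w θ 0 y)
      + (cZ d b)⁻¹ * (∫ y, (g y - c) * K2 (2 * b - d) b z e w θ 0 y) * p * u ^ (p - 1)
      + p * (p - 1) * u ^ (p - 2) *
        ((cZ d b)⁻¹ * ∫ y, (g y - c) * K1 (2 * b - d) b z e w θ 0 y) ^ 2 := by
  have hd' : (1 : ℝ) ≤ d := by exact_mod_cast hd
  have hb2 : (d : ℝ) < 2 * b := by linarith
  have hgc : Continuous g := hg.continuous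
  have hgp : Continuous (fun x => g x ^ p) := hgc.rpow_const fun x => Or.inl (hgpos x).ne'
  have h0 : 0 < kW w θ 0 := by simp [kW, hw]
  have hO : ∀ᶠ t in nhds (0 : ℝ), 0 < kW w θ t := (O_open w θ).mem_nhds h0
  set Q := fun t => ∫ y, (g y ^ (p - 2) * ‖gradient g y‖ ^ 2) *
        K0 (2 * b - d) (b - 1) z e w θ t y with hQ
  set P := fun t => ∫ y, (g y ^ p - c ^ p) * K0 (2 * b - d) b z e w θ t y with hP
  set V := fun t => ∫ y, (g y - c) * K0 (2 * b - d) b z e w θ t y with hV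
  set Q1 := fun t => ∫ y, (g y ^ (p - 2) * ‖gradient g y‖ ^ 2) *
        K1 (2 * b - d) (b - 1) z e w θ t y with hQ1
  set P1 := fun t => ∫ y, (g y ^ p - c ^ p) * K1 (2 * b - d) b z e w θ t y with hP1
  set V1 := fun t => ∫ y, (g y - c) * K1 (2 * b - d) b z e w θ t y with hV1
  set C0 := p * (p - 1) / (4 * (b - 1)) with hC0
  set Zi := (cZ d b)⁻¹ with hZi
  have hDD : ∀ t, 0 < kW w θ t → DD d b p g (z + t • e, kW w θ t) =
      C0 * (Zi * Q t) - (c ^ p + Zi * P t) + (c + Zi * V t) ^ p := by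
    intro t ht
    unfold DD
    simp only
    have e3 := cov_int2 hb2 (fun x => g x ^ (p - 2) * ‖gradient g x‖ ^ 2) (z + t • e) ht.ne'
    rw [avg_kernel hd hb hgc c hc z e ht, avg_kernel hd hb hgp (c ^ p) hcp z e ht, e3,
      abs_of_pos ht]
    rfl
  have hu0 : u = c + Zi * V 0 := by
    rw [hu, ← avg_kernel hd hb hgc c hc z e h0]
    simp [kW]
  set F := fun t => C0 * (Zi * Q t) - (c ^ p + Zi * P t) + (c + Zi * V t) ^ p + ε * kW w θ t with hF
  set F1 := fun t => C0 * (Zi * Q1 t) - Zi * P1 t + Zi * V1 t * p * (c + Zi * V t) ^ (p - 1)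
    + ε * θ with hF1
  have dQ : ∀ t, 0 < kW w θ t → HasDerivAt Q (Q1 t) t := fun t ht =>
    intK0_deriv z e w θ _ _ hqc hq ht
  have dP : ∀ t, 0 < kW w θ t → HasDerivAt P (P1 t) t := fun t ht =>
    intK0_deriv z e w θ _ _ (hgp.sub continuous_const) hcp ht
  have dV : ∀ t, 0 < kW w θ t → HasDerivAt V (V1 t) t := fun t ht =>
    intK0_deriv z e w θ _ _ (hgc.sub continuous_const) hc ht
  have dQ1 : HasDerivAt Q1 (∫ y, (g y ^ (p - 2) * ‖gradient g y‖ ^ 2) *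
        K2 (2 * b - d) (b - 1) z e w θ 0 y) 0 := intK1_deriv z e w θ (2 * b - d) (b - 1) hqc hq h0
  have dP1 : HasDerivAt P1 (∫ y, (g y ^ p - c ^ p) * K2 (2 * b - d) b z e w θ 0 y) 0 :=
    intK1_deriv z e w θ (2 * b - d) b (hgp.sub continuous_const) hcp h0
  have dV1 : HasDerivAt V1 (∫ y, (g y - c) * K2 (2 * b - d) b z e w θ 0 y) 0 :=
    intK1_deriv z e w θ (2 * b - d) b (hgc.sub continuous_const) hc h0
  have hVpos : ∀ᶠ t in nhds (0 : ℝ), 0 < c + Zi * V t := by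
    have hcont : ContinuousAt (fun t => c + Zi * V t) 0 :=
      (((dV 0 h0).const_mul Zi).const_add c).continuousAt
    exact hcont.eventually (lt_mem_nhds (by
      show 0 < c + Zi * V 0
      rw [← hu0]; exact hupos))
  have hlocal : IsLocalMin F 0 := by
    filter_upwards [hO] with t ht
    have h1 := hmin (z + t • e, kW w θ t)
    have h2 := hDD t ht
    have h3 := hDD 0 h0
    simp only [abs_of_pos ht, abs_of_pos hw] at h1
    have h4 : kW w θ 0 = w := by simp [kW]
    rw [h4] at h3
    simp only [zero_smul, add_zero] at h3
    simp only [hF, h4]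
    linarith
  have hder : ∀ᶠ t in nhds (0 : ℝ), HasDerivAt F (F1 t) t := by
    filter_upwards [hO, hVpos] with t ht hVt
    have h := (((((dQ t ht).const_mul Zi).const_mul C0).sub
      (((dP t ht).const_mul Zi).const_add (c ^ p))).add
      ((((dV t ht).const_mul Zi).const_add c).rpow_const (p := p) (Or.inl hVt.ne'))).add
      ((kW_deriv w θ t).const_mul ε)
    exact h
  have hder2 : HasDerivAt F1 (C0 * (Zi * ∫ y, (g y ^ (p - 2) * ‖gradient g y‖ ^ 2) *
        K2 (2 * b - d) (b - 1) z e w θ 0 y)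
      - Zi * (∫ y, (g y ^ p - c ^ p) * K2 (2 * b - d) b z e w θ 0 y)
      + Zi * (∫ y, (g y - c) * K2 (2 * b - d) b z e w θ 0 y) * p * u ^ (p - 1)
      + p * (p - 1) * u ^ (p - 2) * (Zi * V1 0) ^ 2) 0 := by
    have h := ((((dQ1.const_mul Zi).const_mul C0).sub (dP1.const_mul Zi)).add
      (((dV1.const_mul Zi).mul_const p).mul
      ((((dV 0 h0).const_mul Zi).const_add c).rpow_const (p := p - 1)
        (Or.inl hVpos.self_of_nhds.ne')))).add_const (ε * θ)
    refine h.congr_deriv ?_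
    rw [← hu0, show p - 1 - 1 = p - 2 by ring]
    ring
  obtain ⟨r1, r2⟩ := second_deriv_nonneg hlocal hder hder2
  refine ⟨?_, r2⟩
  rw [hu0]
  exact r1

end core


section nomin
variable {d : ℕ} {b : ℝ}

lemma avg_K1 (hd : 1 ≤ d) (hb : (d : ℝ) + 1 ≤ b) {g : Eu d → ℝ} (hg : ContDiff ℝ 1 g)
    {C L : ℝ} (hC : ∀ x, |g x| ≤ C) (hL : ∀ x, ‖gradient g x‖ ≤ L) {c : ℝ}
    (hc : HasCompactSupport (fun x => g x - c)) (z e : Eu d) {w : ℝ} (θ : ℝ) (hw : 0 < w) :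
    (cZ d b)⁻¹ * (∫ y, (g y - c) * K1 (2 * b - d) b z e w θ 0 y) =
      ∫ y, inner ℝ (gradient g (z + w • y)) (e + θ • y) ∂(cauchyMeasure d b) := by
  have h0 : 0 < kW w θ 0 := by simp [kW, hw]
  have hO : ∀ᶠ t in nhds (0 : ℝ), 0 < kW w θ t := (O_open w θ).mem_nhds h0
  have h1 := avg_deriv hd hb hg hC hL z e w θ
  have h2 : HasDerivAt (fun t => ∫ y, (g y - c) * K0 (2 * b - d) b z e w θ t y)
      (∫ y, (g y - c) * K1 (2 * b - d) b z e w θ 0 y) 0 :=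
    intK0_deriv z e w θ (2 * b - d) b (hg.continuous.sub continuous_const) hc h0
  have h3 := (h2.const_mul (cZ d b)⁻¹).const_add c
  refine h3.unique (h1.congr_of_eventuallyEq ?_)
  filter_upwards [hO] with t ht
  exact (avg_kernel hd hb hg.continuous c hc z e ht).symm

lemma no_min (hd : 1 ≤ d) (hb : (d : ℝ) + 1 ≤ b) {p : ℝ} (hp1 : 1 / (b - d) ≤ p - 1) (hp2 : p ≤ 2)
    {g : Eu d → ℝ}
    (hg : ContDiff ℝ 1 g) (hgpos : ∀ x, 0 < g x) {c : ℝ}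
    {C L M : ℝ} (hC : ∀ x, |g x| ≤ C) (hL : ∀ x, ‖gradient g x‖ ≤ L)
    (hM : ∀ x, |g x ^ (p - 2) * ‖gradient g x‖ ^ 2| ≤ M)
    (hc : HasCompactSupport (fun x => g x - c))
    (hcp : HasCompactSupport (fun x => g x ^ p - c ^ p))
    (hqc : Continuous (fun x => g x ^ (p - 2) * ‖gradient g x‖ ^ 2))
    (hq : HasCompactSupport (fun x => g x ^ (p - 2) * ‖gradient g x‖ ^ 2))
    (z : Eu d) {w ε : ℝ} (hw : 0 < w) (hε : 0 < ε)
    (hmin : ∀ x : Eu d × ℝ, DD d b p g (z, w) + ε * |w| ≤ DD d b p g x + ε * |x.2|) : False := by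
  have hd' : (1 : ℝ) ≤ d := by exact_mod_cast hd
  have hb2 : (d : ℝ) < 2 * b := by linarith
  have hprob := isProb hb2
  have hgc : Continuous g := hg.continuous
  have hgradc : Continuous (gradient g) := by
    unfold gradient
    exact (LinearIsometryEquiv.continuous _).comp (hg.continuous_fderiv (by norm_num))
  have hgp : Continuous (fun x => g x ^ p) := hgc.rpow_const fun x => Or.inl (hgpos x).ne'
  have hp0 : 0 < p - 1 := lt_of_lt_of_le (by
    have : 0 < b - d := by linarith
    positivity) hp1
  have hL0 : 0 ≤ L := (norm_nonneg _).trans (hL 0)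
  set μ := cauchyMeasure d b with hμ
  set G := fun y => g (z + w • y) with hG
  set v := fun y => gradient g (z + w • y) with hv
  have hGc : Continuous G := by fun_prop
  have hvc : Continuous v := by fun_prop
  have hGi : Integrable G μ := (integrable_const C).mono' hGc.aestronglyMeasurable
      (Filter.Eventually.of_forall fun y => hC _)
  have hvi : Integrable v μ := (integrable_const L).mono' hvc.aestronglyMeasurable
      (Filter.Eventually.of_forall fun y => hL _)
  have hyv : Integrable (fun y => inner ℝ y (v y)) μ := by
    refine ((integrable_norm_cauchy hd hb).mul_const L).mono'
      (Continuous.aestronglyMeasurable (by fun_prop)) (Filter.Eventually.of_forall fun y => ?_)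
    refine (norm_inner_le_norm _ _).trans ?_
    gcongr
    exact hL _
  have hqcc : Continuous (fun y => G y ^ (p - 2) * ‖v y‖ ^ 2) :=
    hqc.comp (f := fun y => z + w • y) (by fun_prop)
  have hqi : Integrable (fun y => G y ^ (p - 2) * ‖v y‖ ^ 2) μ :=
    (integrable_const M).mono' hqcc.aestronglyMeasurable
      (Filter.Eventually.of_forall fun y => hM _)
  have key := key_ineq hd hb hp1 hp2 G v (fun y => hgpos _) hGi hvi hyv hqi
  set u := ∫ y, G y ∂μ with hu
  have hupos : 0 < u := by
    rw [hu, integral_pos_iff_support_of_nonneg (fun y => (hgpos _).le) hGi]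
    have : Function.support G = Set.univ := by
      ext y; simpa using (hgpos _).ne'
    rw [this]; simp
  set T := ∫ y, G y ^ (p - 2) * ‖v y‖ ^ 2 ∂μ with hT
  set Zi := (cZ d b)⁻¹ with hZi
  have hTe : Zi * (∫ y, (g y ^ (p - 2) * ‖gradient g y‖ ^ 2) *
      (w ^ (2 * b - d) * (w ^ 2 + ‖y - z‖ ^ 2) ^ (-(b - 1) - 1))) = T := by
    have h := cov_int hb2 (fun x => g x ^ (p - 2) * ‖gradient g x‖ ^ 2) z hw.ne'
    rw [abs_of_pos hw] at h
    rw [show -(b - 1) - 1 = -b by ring]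
    exact h.symm
  have hdir := fun (e : Eu d) (θ : ℝ) => dir_cond (θ := θ) hd hb hg hgpos hc hcp hqc hq z e hw hmin u hu hupos
  have hU := fun (e : Eu d) (θ : ℝ) => avg_K1 hd hb hg hC hL hc z e θ hw
  have pq := intPDE (2 * b - d) (b - 1) z hw hqc hq
  have pp := intPDE (2 * b - d) b z hw (hgp.sub continuous_const) hcp
  have pv := intPDE (2 * b - d) b z hw (hgc.sub continuous_const) hc
  simp only [Pi.sub_apply] at pp pv
  rw [show 2 * b - (2 * b - d) - d = (0:ℝ) by ring, mul_zero, zero_mul] at pp pv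
  rw [show 2 * (b - 1) - (2 * b - d) - d = (-2 : ℝ) by ring] at pq
  have hsum := Finset.sum_nonneg (s := Finset.univ)
    (fun (i : Fin d) _ => (hdir (EuclideanSpace.single i (1 : ℝ)) 0).2)
  have h1 := (hdir 0 1).1
  have h2 := (hdir 0 1).2
  simp only [Finset.sum_add_distrib, Finset.sum_sub_distrib, ← Finset.mul_sum, ← Finset.sum_mul]
    at hsum
  have hU1 : ∑ i, (Zi * ∫ y, (g y - c) * K1 (2 * b - d) b z (EuclideanSpace.single i (1 : ℝ)) w 0 0 y) ^ 2
      = ‖∫ y, v y ∂μ‖ ^ 2 := by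
    rw [EuclideanSpace.norm_sq_eq]
    refine Finset.sum_congr rfl fun i _ => ?_
    rw [hU]
    have : ∫ y, inner ℝ (gradient g (z + w • y)) (EuclideanSpace.single i (1 : ℝ) + (0 : ℝ) • y) ∂μ
        = (∫ y, v y ∂μ) i := by
      have h := integral_inner (𝕜 := ℝ) hvi (EuclideanSpace.single i (1 : ℝ))
      rw [EuclideanSpace.inner_single_left] at h
      simp only [zero_smul, add_zero]
      simp only [map_one, one_mul] at h
      rw [← h]
      exact integral_congr_ae (Filter.Eventually.of_forall fun y => real_inner_comm _ _)
    rw [this]; simp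
  have hU2 : Zi * (∫ y, (g y - c) * K1 (2 * b - d) b z 0 w 1 0 y) = ∫ y, inner ℝ y (v y) ∂μ := by
    rw [hU]
    simp only [zero_add, one_smul]
    exact integral_congr_ae (Filter.Eventually.of_forall fun y => real_inner_comm _ _)
  rw [hU1] at hsum
  rw [hU2] at h2 h1
  have hα : (1 - (2 * b - d)) / w * ε < 0 := by
    have : (1 - (2 * b - d)) / w < 0 := div_neg_of_neg_of_pos (by linarith) hw
    exact mul_neg_of_neg_of_pos this hε
  have hkey : u ^ (p - 2) * (‖∫ y, v y ∂μ‖ ^ 2 + (∫ y, inner ℝ y (v y) ∂μ) ^ 2) ≤ T := by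
    calc _ ≤ u ^ (p - 2) * (u ^ (2 - p) * T) := by gcongr
      _ = T := by
        rw [← mul_assoc, ← Real.rpow_add hupos]; simp
  have hC0 : p * (p - 1) / (4 * (b - 1)) * (4 * (b - 1)) = p * (p - 1) := by
    have : b - 1 ≠ 0 := by linarith
    field_simp
  set C0 := p * (p - 1) / (4 * (b - 1))
  have hpk : 0 ≤ p * (p - 1) := by nlinarith
  have hkey2 := mul_le_mul_of_nonneg_left hkey hpk
  rw [← hU2] at h1
  set k := (1 - (2 * b - d)) / w
  have a1 := congrArg (fun x => C0 * Zi * x) pq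
  have a2 := congrArg (fun x => Zi * x) pp
  have a3 := congrArg (fun x => Zi * p * u ^ (p - 1) * x) pv
  have a4 := congrArg (fun x => k * x) h1
  have a5 := congrArg (fun x => p * (p - 1) * x) hTe
  have a6 : C0 * Zi * (2 * (b - 1) * (-2) * ∫ y, (g y ^ (p - 2) * ‖gradient g y‖ ^ 2) *
      (w ^ (2 * b - d) * (w ^ 2 + ‖y - z‖ ^ 2) ^ (-(b - 1) - 1))) = - (p * (p - 1) * T) := by
    rw [← hTe, ← hC0]; ring
  rw [a6] at a1
  linarith
end nomin


section core
variable {d : ℕ} {b : ℝ}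

lemma DD_abs (hb2 : (d : ℝ) < 2 * b) (p : ℝ) (g : Eu d → ℝ) (z : Eu d) {w : ℝ} (hw : w ≠ 0) :
    DD d b p g (z, |w|) = DD d b p g (z, w) := by
  have hw' : |w| ≠ 0 := abs_ne_zero.2 hw
  unfold DD
  simp only
  rw [cov_int2 hb2 (fun x => g x ^ (p - 2) * ‖gradient g x‖ ^ 2) z hw,
    cov_int2 hb2 (fun x => g x ^ (p - 2) * ‖gradient g x‖ ^ 2) z hw',
    cov_int hb2 g z hw, cov_int hb2 g z hw',
    cov_int hb2 (fun x => g x ^ p) z hw, cov_int hb2 (fun x => g x ^ p) z hw', abs_abs, sq_abs]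

lemma core (hd : 1 ≤ d) (hb : (d : ℝ) + 1 ≤ b) {p : ℝ} (hp1 : 1 / (b - d) ≤ p - 1) (hp2 : p ≤ 2)
    {g : Eu d → ℝ} (hg : ContDiff ℝ 1 g) (hgpos : ∀ x, 0 < g x) {c : ℝ}
    (hc : HasCompactSupport (fun x => g x - c)) : 0 ≤ DD d b p g (0, 1) := by
  have hd' : (1 : ℝ) ≤ d := by exact_mod_cast hd
  have hb2 : (d : ℝ) < 2 * b := by linarith
  have hprob := isProb hb2
  have hgc : Continuous g := hg.continuous
  have hgradc : Continuous (gradient g) := by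
    unfold gradient
    exact (LinearIsometryEquiv.continuous _).comp (hg.continuous_fderiv (by norm_num))
  have hgp : Continuous (fun x => g x ^ p) := hgc.rpow_const fun x => Or.inl (hgpos x).ne'
  have hp0 : 0 < p - 1 := lt_of_lt_of_le (by
    have : 0 < b - d := by linarith
    positivity) hp1
  have hcp : HasCompactSupport (fun x => g x ^ p - c ^ p) := by
    refine hc.mono fun x hx => ?_
    rw [Function.mem_support] at hx ⊢
    contrapose! hx
    rw [sub_eq_zero.1 hx, sub_self]
  have hgrads : HasCompactSupport (gradient g) := by
    refine hc.of_isClosed_subset (isClosed_tsupport _) (closure_minimal ?_ (isClosed_tsupport _))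
    have h2 := support_fderiv_subset ℝ (f := fun x => g x - c)
    intro x hx
    apply h2
    rw [Function.mem_support] at hx ⊢
    contrapose! hx
    rw [fderiv_sub_const] at hx
    simp [gradient, hx]
  have hqc : Continuous (fun x => g x ^ (p - 2) * ‖gradient g x‖ ^ 2) :=
    (hgc.rpow_const fun x => Or.inl (hgpos x).ne').mul (hgradc.norm.pow 2)
  have hq : HasCompactSupport (fun x => g x ^ (p - 2) * ‖gradient g x‖ ^ 2) := by
    refine hgrads.mono fun x hx => ?_
    rw [Function.mem_support] at hx ⊢
    contrapose! hx
    simp [hx]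
  obtain ⟨C1, hC1⟩ := (hgc.sub continuous_const).bounded_above_of_compact_support hc
  obtain ⟨C2, hC2⟩ := (hgp.sub continuous_const).bounded_above_of_compact_support hcp
  obtain ⟨L, hL⟩ := hgradc.bounded_above_of_compact_support hgrads
  obtain ⟨M, hM⟩ := hqc.bounded_above_of_compact_support hq
  have hC : ∀ x, |g x| ≤ C1 + |c| := fun x => by
    have h := hC1 x
    simp only [Real.norm_eq_abs, Pi.sub_apply] at h
    have h2 := abs_add_le (g x - c) c
    rw [sub_add_cancel] at h2
    linarith
  have hCp : ∀ x, |g x ^ p| ≤ C2 + |c ^ p| := fun x => by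
    have h := hC2 x
    simp only [Real.norm_eq_abs, Pi.sub_apply] at h
    have h2 := abs_add_le (g x ^ p - c ^ p) (c ^ p)
    rw [sub_add_cancel] at h2
    linarith
  set μ := cauchyMeasure d b with hμ
  have hU : Continuous (fun x : Eu d × ℝ => ∫ y, g (x.1 + x.2 • y) ∂μ) := by
    simpa using cont_avg (b := b) (m := fun _ => 1) hgc hC (integrable_const _)
  have hP : Continuous (fun x : Eu d × ℝ => ∫ y, g (x.1 + x.2 • y) ^ p ∂μ) := by
    simpa using cont_avg (b := b) (m := fun _ => 1) hgp hCp (integrable_const _)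
  have hQ := cont_avg (b := b) hqc hM (integrable_one_add_sq hd hb)
  have hDDc : Continuous (DD d b p g) := by
    unfold DD
    exact ((continuous_const.mul ((continuous_snd.pow 2).mul hQ)).sub hP).add
      (hU.rpow_const fun x => Or.inr (by linarith))
  -- limits at infinity
  have gi : ∀ x : Eu d × ℝ, Integrable (fun y => g (x.1 + x.2 • y)) μ := fun x =>
    (integrable_const (C1 + |c|)).mono' (Continuous.aestronglyMeasurable (by fun_prop))
      (Filter.Eventually.of_forall fun y => hC _)
  have gpi : ∀ x : Eu d × ℝ, Integrable (fun y => g (x.1 + x.2 • y) ^ p) μ := fun x =>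
    (integrable_const (C2 + |c ^ p|)).mono'
      (hgp.comp (f := fun y => x.1 + x.2 • y) (by fun_prop)).aestronglyMeasurable
      (Filter.Eventually.of_forall fun y => hCp _)
  have lU : Filter.Tendsto (fun x : Eu d × ℝ => ∫ y, g (x.1 + x.2 • y) ∂μ)
      (Filter.cocompact _) (nhds c) := by
    have h := (decay hd hb (hgc.sub continuous_const) hc).add_const c
    rw [zero_add] at h
    refine h.congr fun x => ?_
    simp only [Pi.sub_apply]
    rw [integral_sub (gi x) (integrable_const c)]
    simp
  have lP : Filter.Tendsto (fun x : Eu d × ℝ => ∫ y, g (x.1 + x.2 • y) ^ p ∂μ)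
      (Filter.cocompact _) (nhds (c ^ p)) := by
    have h := (decay hd hb (hgp.sub continuous_const) hcp).add_const (c ^ p)
    rw [zero_add] at h
    refine h.congr fun x => ?_
    simp only [Pi.sub_apply]
    rw [integral_sub (gpi x) (integrable_const _)]
    simp
  have lE : Filter.Tendsto (fun x : Eu d × ℝ => - ∫ y, g (x.1 + x.2 • y) ^ p ∂μ +
      (∫ y, g (x.1 + x.2 • y) ∂μ) ^ p) (Filter.cocompact _) (nhds 0) := by
    have h := lP.neg.add (lU.rpow_const (p := p) (Or.inr (by linarith)))
    rwa [neg_add_cancel] at h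
  by_contra hneg
  push Not at hneg
  set ε := - DD d b p g (0, 1) / 2 with hεd
  have hε : 0 < ε := by rw [hεd]; linarith
  have hΦ0 : DD d b p g ((0, 1) : Eu d × ℝ) + ε * |((0, 1) : Eu d × ℝ).2| < 0 := by
    simp only [abs_one, mul_one]; rw [hεd]; linarith
  obtain ⟨⟨z, w⟩, hzw⟩ := Continuous.exists_forall_le'
    (f := fun x : Eu d × ℝ => DD d b p g x + ε * |x.2|)
    (by fun_prop) (0, 1) (by
      filter_upwards [lE.eventually (lt_mem_nhds hΦ0)] with x hx
      refine hx.le.trans ?_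
      unfold DD
      have h1 : 0 ≤ p * (p - 1) / (4 * (b - 1)) * (x.2 ^ 2 *
          ∫ y, (g (x.1 + x.2 • y) ^ (p - 2) * ‖gradient g (x.1 + x.2 • y)‖ ^ 2) * (1 + ‖y‖ ^ 2)
          ∂(cauchyMeasure d b)) := by
        have : 0 ≤ p * (p - 1) / (4 * (b - 1)) := by
          apply div_nonneg <;> nlinarith
        refine mul_nonneg this (mul_nonneg (sq_nonneg _) (integral_nonneg fun y => ?_))
        have := (hgpos (x.1 + x.2 • y)).le
        positivity
      have h2 : 0 ≤ ε * |x.2| := by positivity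
      linarith)
  simp only at hzw
  have hlt := (hzw (0, 1)).trans_lt hΦ0
  rcases eq_or_ne w 0 with rfl | hw
  · have : DD d b p g (z, 0) = 0 := by simp [DD, hprob]
    rw [this] at hlt
    simp at hlt
  · refine no_min hd hb hp1 hp2 hg hgpos hC hL hM hc hcp hqc hq z (abs_pos.2 hw) hε ?_
    intro x
    rw [DD_abs hb2 p g z hw, abs_abs]
    exact hzw x

end core


section approx
variable {d : ℕ} {b : ℝ}

lemma norm_gradient_eq (f : Eu d → ℝ) (x : Eu d) : ‖gradient f x‖ = ‖fderiv ℝ f x‖ := by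
  simp [gradient]

lemma beckner_pos (hd : 1 ≤ d) (hb : (d : ℝ) + 1 ≤ b) {p : ℝ} (hp1 : 1 / (b - d) ≤ p - 1)
    (hp2 : p ≤ 2) {f : Eu d → ℝ} (hf : ContDiff ℝ 1 f) (hfpos : ∀ x, 0 < f x) {a : ℝ}
    (ha : HasCompactSupport (fun x => f x - a)) :
    p / (p - 1) *
        (∫ y, f y ^ 2 ∂(cauchyMeasure d b) -
          (∫ y, f y ^ (2 / p) ∂(cauchyMeasure d b)) ^ p) ≤
      1 / (b - 1) *
        ∫ y, ‖gradient f y‖ ^ 2 * (1 + ‖y‖ ^ 2) ∂(cauchyMeasure d b) := by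
  have hd' : (1 : ℝ) ≤ d := by exact_mod_cast hd
  have hp0 : 0 < p - 1 := lt_of_lt_of_le (by
    have : 0 < b - d := by linarith
    positivity) hp1
  have hp : 0 < p := by linarith
  have hb1 : 0 < b - 1 := by linarith
  have hg : ContDiff ℝ 1 (fun x => f x ^ (2 / p)) := hf.rpow_const_of_ne fun x => (hfpos x).ne'
  have hc : HasCompactSupport (fun x => f x ^ (2 / p) - a ^ (2 / p)) := by
    refine ha.mono fun x hx => ?_
    rw [Function.mem_support] at hx ⊢
    contrapose! hx
    rw [sub_eq_zero.1 hx, sub_self]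
  have h := core hd hb hp1 hp2 hg (fun x => Real.rpow_pos_of_pos (hfpos x) _) hc
  unfold DD at h
  simp only [zero_add, one_smul, one_pow, one_mul] at h
  have e1 : ∀ y, (f y ^ (2 / p)) ^ p = f y ^ 2 := fun y => by
    rw [← Real.rpow_mul (hfpos y).le, div_mul_cancel₀ _ hp.ne']; norm_cast
  have e2 : ∀ y, (f y ^ (2 / p)) ^ (p - 2) * ‖gradient (fun x => f x ^ (2 / p)) y‖ ^ 2
      = 4 / p ^ 2 * ‖gradient f y‖ ^ 2 := fun y => by
    have hfd := (hf.differentiable (by norm_num) y).hasFDerivAt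
    have h3 := (hfd.rpow_const (p := 2 / p) (Or.inl (hfpos y).ne')).fderiv
    rw [norm_gradient_eq, norm_gradient_eq, h3, norm_smul, Real.norm_eq_abs, mul_pow, sq_abs,
      mul_pow, ← Real.rpow_mul (hfpos y).le, ← Real.rpow_natCast (f y ^ (2 / p - 1)) 2,
      ← Real.rpow_mul (hfpos y).le]
    have h4 : f y ^ (2 / p * (p - 2)) * f y ^ ((2 / p - 1) * ((2 : ℕ) : ℝ)) = 1 := by
      rw [← Real.rpow_add (hfpos y)]
      convert Real.rpow_zero (f y) using 2
      push_cast; field_simp; ring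
    linear_combination (4 / p ^ 2) * ‖fderiv ℝ f y‖ ^ 2 * h4
  simp only [e1, e2] at h
  simp only [mul_assoc] at h
  rw [integral_const_mul] at h
  set I := ∫ y, ‖gradient f y‖ ^ 2 * (1 + ‖y‖ ^ 2) ∂(cauchyMeasure d b)
  set E := ∫ y, f y ^ 2 ∂(cauchyMeasure d b) -
          (∫ y, f y ^ (2 / p) ∂(cauchyMeasure d b)) ^ p with hE
  have h5 : E ≤ p * (p - 1) / (4 * (b - 1)) * (4 / p ^ 2 * I) := by
    rw [hE]
    linarith
  calc p / (p - 1) * E ≤ p / (p - 1) * (p * (p - 1) / (4 * (b - 1)) * (4 / p ^ 2 * I)) := by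
        gcongr
    _ = 1 / (b - 1) * I := by field_simp

end approx

section final
variable {d : ℕ}

lemma bump_exists (d : ℕ) : ∃ (χ : Eu d → ℝ) (K : ℝ), ContDiff ℝ 1 χ ∧ HasCompactSupport χ ∧
    (∀ x, 0 ≤ χ x) ∧ (∀ x, χ x ≤ 1) ∧ (∀ x, ‖x‖ ≤ 1 → χ x = 1) ∧ (∀ x, ‖fderiv ℝ χ x‖ ≤ K) ∧
    (∀ x, 2 < ‖x‖ → fderiv ℝ χ x = 0) := by
  let B : ContDiffBump (0 : Eu d) := ⟨1, 2, by norm_num, by norm_num⟩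
  have h1 : ContDiff ℝ 1 B := B.contDiff
  obtain ⟨K, hK⟩ := (h1.continuous_fderiv (by norm_num)).bounded_above_of_compact_support
    (B.hasCompactSupport.fderiv ℝ)
  refine ⟨B, K, h1, B.hasCompactSupport, fun x => B.nonneg, fun x => B.le_one, fun x hx =>
    B.one_of_mem_closedBall (by simpa using hx), hK, fun x hx => ?_⟩
  by_contra hne
  have h2 := support_fderiv_subset ℝ (f := (B : Eu d → ℝ)) hne
  rw [B.tsupport_eq] at h2
  have : ‖x‖ ≤ 2 := by simpa using h2
  linarith

end final

set_option maxHeartbeats 800000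

theorem cauchy_beckner (d : ℕ) (hd : 1 ≤ d) (b : ℝ) (hb : (d : ℝ) + 1 ≤ b)
    (p : ℝ) (hp : p ∈ Set.Icc (1 + 1 / (b - d)) 2)
    (f : EuclideanSpace ℝ (Fin d) → ℝ) (hf : ContDiff ℝ (⊤ : ℕ∞) f) (hfpos : ∀ y, 0 ≤ f y)
    (hint1 : Integrable (fun y => f y ^ 2) (cauchyMeasure d b))
    (hint2 : Integrable (fun y => f y ^ (2 / p)) (cauchyMeasure d b))
    (hint3 : Integrable (fun y => ‖gradient f y‖ ^ 2 * (1 + ‖y‖ ^ 2))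
      (cauchyMeasure d b)) :
    p / (p - 1) *
        (∫ y, f y ^ 2 ∂(cauchyMeasure d b) -
          (∫ y, f y ^ (2 / p) ∂(cauchyMeasure d b)) ^ p) ≤
      1 / (b - 1) *
        ∫ y, ‖gradient f y‖ ^ 2 * (1 + ‖y‖ ^ 2) ∂(cauchyMeasure d b) := by
  obtain ⟨hpl, hp2⟩ := hp
  have hp1 : 1 / (b - d) ≤ p - 1 := by linarith
  have hd' : (1 : ℝ) ≤ d := by exact_mod_cast hd
  have hb2 : (d : ℝ) < 2 * b := by linarith
  have hprob := isProb hb2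
  have hp0 : 0 < p - 1 := lt_of_lt_of_le (by
    have : 0 < b - d := by linarith
    positivity) hp1
  have hp : 0 < p := by linarith
  have hf1 : ContDiff ℝ 1 f := hf.of_le (by exact_mod_cast le_top)
  obtain ⟨χ, K, hχ, hχs, hχ0, hχ1, hχone, hχK, hχz⟩ := bump_exists d
  set μ := cauchyMeasure d b with hμ
  let s : ℕ → ℝ := fun n => ((n : ℝ) + 1)⁻¹
  have hs0 : ∀ n, 0 < s n := fun n => by positivity
  have hs1 : ∀ n, s n ≤ 1 := fun n => inv_le_one_of_one_le₀ (by linarith [n.cast_nonneg (α := ℝ)])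
  have hst : Filter.Tendsto s Filter.atTop (nhds 0) := by
    simpa [s] using tendsto_one_div_add_atTop_nhds_zero_nat (𝕜 := ℝ)
  let F : ℕ → Eu d → ℝ := fun n y => χ (s n • y) * f y + s n
  have hχn : ∀ n, ContDiff ℝ 1 (fun y : Eu d => χ (s n • y)) := fun n =>
    hχ.comp (contDiff_const_smul (s n))
  have hF1 : ∀ n, ContDiff ℝ 1 (F n) := fun n => ((hχn n).mul hf1).add contDiff_const
  have hFc : ∀ n, Continuous (F n) := fun n => (hF1 n).continuous
  have hFpos : ∀ n y, 0 < F n y := fun n y =>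
    add_pos_of_nonneg_of_pos (mul_nonneg (hχ0 _) (hfpos y)) (hs0 n)
  have hFle : ∀ n y, F n y ≤ f y + 1 := fun n y => by
    have := mul_le_mul_of_nonneg_right (hχ1 (s n • y)) (hfpos y)
    have := hs1 n
    simp only [F]; linarith
  have hFs : ∀ n, HasCompactSupport (fun x => F n x - s n) := fun n => by
    have h1 : HasCompactSupport (fun y : Eu d => χ (s n • y)) :=
      hχs.comp_homeomorph (Homeomorph.smulOfNeZero (s n) (hs0 n).ne')
    have h2 : HasCompactSupport (fun y : Eu d => χ (s n • y) * f y) := h1.mul_right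
    have h3 : (fun x => F n x - s n) = fun y : Eu d => χ (s n • y) * f y := by
      funext x; simp [F]
    rw [h3]; exact h2
  have hmain := fun n => beckner_pos hd hb hp1 hp2 (hF1 n) (hFpos n) (hFs n)
  have hev : ∀ y : Eu d, ∀ᶠ n in Filter.atTop, ‖s n • y‖ < 1 := fun y => by
    have h : Filter.Tendsto (fun n => ‖s n • y‖) Filter.atTop (nhds 0) := by
      have := (hst.smul_const y).norm
      simpa using this
    exact h.eventually (gt_mem_nhds one_pos)
  have hFlim : ∀ y, Filter.Tendsto (fun n => F n y) Filter.atTop (nhds (f y)) := fun y => by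
    have h : Filter.Tendsto (fun n => f y + s n) Filter.atTop (nhds (f y)) := by
      simpa using hst.const_add (f y)
    refine h.congr' ?_
    filter_upwards [hev y] with n hn
    simp [F, hχone _ hn.le]
  have hb1i : Integrable (fun y => 2 * f y ^ 2 + 2) μ := (hint1.const_mul 2).add (integrable_const _)
  have t1 : Filter.Tendsto (fun n => ∫ y, F n y ^ 2 ∂μ) Filter.atTop (nhds (∫ y, f y ^ 2 ∂μ)) := by
    refine tendsto_integral_of_dominated_convergence (fun y => 2 * f y ^ 2 + 2)
      (fun n => ((hFc n).pow 2).aestronglyMeasurable) hb1i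
      (fun n => Filter.Eventually.of_forall fun y => ?_)
      (Filter.Eventually.of_forall fun y => (hFlim y).pow 2)
    have h1 := hFle n y
    have h2 := (hFpos n y).le
    rw [Real.norm_eq_abs, abs_of_nonneg (sq_nonneg _)]
    nlinarith [sq_nonneg (f y - 1)]
  have t2 : Filter.Tendsto (fun n => ∫ y, F n y ^ (2 / p) ∂μ) Filter.atTop
      (nhds (∫ y, f y ^ (2 / p) ∂μ)) := by
    refine tendsto_integral_of_dominated_convergence (fun y => 2 * f y ^ 2 + 2)
      (fun n => ((hFc n).rpow_const fun y => Or.inl (hFpos n y).ne').aestronglyMeasurable) hb1i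
      (fun n => Filter.Eventually.of_forall fun y => ?_)
      (Filter.Eventually.of_forall fun y => (hFlim y).rpow_const (Or.inr (by positivity)))
    have h1 := hFle n y
    have h2 := (hFpos n y).le
    have h3 := hfpos y
    rw [Real.norm_eq_abs, abs_of_nonneg (Real.rpow_nonneg h2 _)]
    have h4 : 2 / p ≤ 2 := by
      rw [div_le_iff₀ hp]; nlinarith
    calc F n y ^ (2 / p) ≤ (f y + 1) ^ (2 / p) := Real.rpow_le_rpow h2 h1 (by positivity)
      _ ≤ (f y + 1) ^ (2 : ℝ) := Real.rpow_le_rpow_of_exponent_le (by linarith) h4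
      _ = (f y + 1) ^ 2 := by norm_cast
      _ ≤ _ := by nlinarith [sq_nonneg (f y - 1)]
  have hgradc : ∀ n, Continuous (gradient (F n)) := fun n => by
    unfold gradient
    exact (LinearIsometryEquiv.continuous _).comp ((hF1 n).continuous_fderiv (by norm_num))
  have hfdχ : ∀ n y, HasFDerivAt (fun y : Eu d => χ (s n • y)) (s n • fderiv ℝ χ (s n • y)) y := by
    intro n y
    have h1 := (hχ.differentiable (by norm_num) (s n • y)).hasFDerivAt
    have h2 : HasFDerivAt (fun y : Eu d => s n • y) (s n • ContinuousLinearMap.id ℝ (Eu d)) y :=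
      (hasFDerivAt_id y).const_smul (s n)
    have h3 := h1.comp y h2
    refine h3.congr_fderiv ?_
    ext v
    simp
  have hfdF : ∀ n y, fderiv ℝ (F n) y = χ (s n • y) • fderiv ℝ f y +
      f y • (s n • fderiv ℝ χ (s n • y)) := fun n y =>
    (((hfdχ n y).mul (hf1.differentiable (by norm_num) y).hasFDerivAt).add_const (s n)).fderiv
  have hsK : ∀ n (y : Eu d), ‖s n • fderiv ℝ χ (s n • y)‖ ^ 2 * (1 + ‖y‖ ^ 2) ≤ 5 * K ^ 2 := by
    intro n y
    by_cases hy : 2 < ‖s n • y‖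
    · rw [hχz _ hy]; simp; positivity
    · push Not at hy
      rw [norm_smul, Real.norm_eq_abs, abs_of_pos (hs0 n)] at hy ⊢
      have hk := hχK (s n • y)
      have hk0 := norm_nonneg (fderiv ℝ χ (s n • y))
      have hs := hs0 n
      have hs' := hs1 n
      have e1 : s n ^ 2 * (1 + ‖y‖ ^ 2) ≤ 5 := by
        have a1 : (s n * ‖y‖) ^ 2 ≤ 2 ^ 2 := pow_le_pow_left₀ (by positivity) hy 2
        nlinarith
      have e2 : ‖fderiv ℝ χ (s n • y)‖ ^ 2 ≤ K ^ 2 := pow_le_pow_left₀ hk0 hk 2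
      calc _ = (s n ^ 2 * (1 + ‖y‖ ^ 2)) * ‖fderiv ℝ χ (s n • y)‖ ^ 2 := by ring
        _ ≤ 5 * K ^ 2 := by gcongr
  have hb3i : Integrable (fun y => 2 * (‖gradient f y‖ ^ 2 * (1 + ‖y‖ ^ 2)) +
      2 * (5 * K ^ 2) * f y ^ 2) μ :=
    (hint3.const_mul 2).add (hint1.const_mul (2 * (5 * K ^ 2)))
  have hm3 : ∀ n, AEStronglyMeasurable (fun y => ‖gradient (F n) y‖ ^ 2 * (1 + ‖y‖ ^ 2)) μ :=
    fun n => by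
      have h1 : Continuous (fun y : Eu d => 1 + ‖y‖ ^ 2) := by fun_prop
      have h2 : Continuous (fun y : Eu d => ‖gradient (F n) y‖ ^ 2) := (hgradc n).norm.pow 2
      exact (h2.mul h1).aestronglyMeasurable
  have t3 : Filter.Tendsto (fun n => ∫ y, ‖gradient (F n) y‖ ^ 2 * (1 + ‖y‖ ^ 2) ∂μ) Filter.atTop
      (nhds (∫ y, ‖gradient f y‖ ^ 2 * (1 + ‖y‖ ^ 2) ∂μ)) := by
    refine tendsto_integral_of_dominated_convergence
      (fun y => 2 * (‖gradient f y‖ ^ 2 * (1 + ‖y‖ ^ 2)) + 2 * (5 * K ^ 2) * f y ^ 2)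
      hm3 hb3i
      (fun n => Filter.Eventually.of_forall fun y => ?_)
      (Filter.Eventually.of_forall fun y => ?_)
    · rw [Real.norm_eq_abs, abs_of_nonneg (by positivity), norm_gradient_eq, norm_gradient_eq,
        hfdF]
      have a1 : ‖χ (s n • y) • fderiv ℝ f y + f y • (s n • fderiv ℝ χ (s n • y))‖ ≤
          ‖fderiv ℝ f y‖ + f y * ‖s n • fderiv ℝ χ (s n • y)‖ := by
        refine (norm_add_le _ _).trans ?_
        rw [norm_smul (χ (s n • y)), norm_smul (f y), Real.norm_eq_abs, Real.norm_eq_abs,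
          abs_of_nonneg (hχ0 _), abs_of_nonneg (hfpos y)]
        have := mul_le_mul_of_nonneg_right (hχ1 (s n • y)) (norm_nonneg (fderiv ℝ f y))
        linarith
      have a2 := hsK n y
      set X := ‖fderiv ℝ f y‖
      set Y := ‖s n • fderiv ℝ χ (s n • y)‖
      have a3 := pow_le_pow_left₀ (norm_nonneg _) a1 2
      have a4 : (X + f y * Y) ^ 2 ≤ 2 * X ^ 2 + 2 * (f y * Y) ^ 2 := by
        nlinarith [sq_nonneg (X - f y * Y)]
      calc _ ≤ (2 * X ^ 2 + 2 * (f y * Y) ^ 2) * (1 + ‖y‖ ^ 2) := by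
            gcongr
            exact a3.trans a4
        _ = 2 * (X ^ 2 * (1 + ‖y‖ ^ 2)) + 2 * f y ^ 2 * (Y ^ 2 * (1 + ‖y‖ ^ 2)) := by ring
        _ ≤ 2 * (X ^ 2 * (1 + ‖y‖ ^ 2)) + 2 * f y ^ 2 * (5 * K ^ 2) := by gcongr
        _ = _ := by ring
    · refine tendsto_const_nhds.congr' ?_
      filter_upwards [hev y] with n hn
      have hz : fderiv ℝ χ (s n • y) = 0 := by
        have : χ =ᶠ[nhds (s n • y)] fun _ => 1 := by
          filter_upwards [(isOpen_lt continuous_norm continuous_const).mem_nhds hn] with x hx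
          exact hχone x (le_of_lt hx)
        rw [this.fderiv_eq]; simp
      rw [norm_gradient_eq, norm_gradient_eq, hfdF, hz, hχone _ hn.le]
      simp
  have l1 := (t1.sub (t2.rpow_const (p := p) (Or.inr hp.le))).const_mul (p / (p - 1))
  have l2 := t3.const_mul (1 / (b - 1))
  exact le_of_tendsto_of_tendsto' l1 l2 hmain
end
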